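/- Let K be a convex body in ℝ^n (n ≥ 2) with 0 in its interior such that either the barycenter of K is at the origin or the barycenter of the polar body K° is at the origin. Then there exists an absolute constant C > 0 such that for every 1 ≤ k ≤ n−1 and every k-dimensional linear subspace H of ℝ^n, vrad(K_out ∩ H) ≤ (n/k)·C·(log n)^3 · vrad(K_in ∩ H), where the volume radii are computed in H. -/

import Mathlib

open MeasureTheory Metric Set
open scoped ENNReal RealInnerProductSpace Pointwise

noncomputable section

/-- The polar body of `K`. -/
def polarBody {n : ℕ} (K : Set (EuclideanSpace ℝ (Fin n))) : Set (EuclideanSpace ℝ (Fin n)) :=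
  {x | ∀ y ∈ K, ⟪x, y⟫ ≤ 1}

/-- The volume radius of a subset of a `k`-dimensional subspace `H`: the `k`-th root of the
ratio of its `k`-dimensional (Hausdorff) volume to that of the unit ball of `H`. -/
def vrad {n : ℕ} (k : ℕ) (H : Submodule ℝ (EuclideanSpace ℝ (Fin n)))
    (A : Set (EuclideanSpace ℝ (Fin n))) : ℝ≥0∞ :=
  (μH[(k : ℝ)] A / μH[(k : ℝ)] (closedBall (0 : EuclideanSpace ℝ (Fin n)) 1 ∩ (H : Set _)))
    ^ ((k : ℝ)⁻¹)

open Module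

/-!
By the Brunn–Minkowski inequality, the `k`-th root of the volume is concave along a concave family
of `k`-dimensional convex sets. If the barycenter of the parameter body `K` is `0`, integrating a
supergradient at `0` shows that at least a fixed proportion of `K` carries members of the family
that are not much larger than the one at `0`. For the sections of `K ∩ (2p - K)` parallel to `H`
this turns a Rogers–Shephard type estimate of `(K - K) ∩ H`, a priori in terms of an average over
`p ∈ K`, into one in terms of `K ∩ (-K) ∩ H`, with a loss of `(C n / k) ^ k`. The same scheme
bounds the projection of `K - K` onto `H` by the projection of `K ∩ (-K)`.

If instead the barycenter of `K°` is `0`, the projection estimate for `K°` is dualized inside `H`,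
where polarity exchanges projections and sections. The price is a pair of bounds for the volume
product, obtained by Kuperberg's iteration `T ↦ r • (T ∩ T°)`. Started at Auerbach position, at
distance at most `k` from the Euclidean ball, it reaches bounded distance after about `log₂ log₂ k`
steps. Each step costs a factor `8 ^ k` in total, whence `(log k) ^ 3`.
-/

/-! ### The Prékopa–Leindler inequality -/

theorem volume_add_le_volume_add_of_isCompact {A B : Set ℝ} (hA : IsCompact A) (hB : IsCompact B)
    (hA₀ : A.Nonempty) (hB₀ : B.Nonempty) : volume A + volume B ≤ volume (A + B) := by
  obtain ⟨a, ha, ha_max⟩ := hA.exists_isGreatest hA₀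
  obtain ⟨b, hb, hb_min⟩ := hB.exists_isLeast hB₀
  have h_disj : AEDisjoint volume (A + {b}) ({a} + B) := by
    refine measure_mono_null (t := {a + b}) ?_ (by simp)
    rintro _ ⟨⟨x, hx, _, rfl, rfl⟩, ⟨_, rfl, y, hy, hxy⟩⟩
    have := ha_max hx
    have := hb_min hy
    simp only [mem_singleton_iff] at hxy ⊢
    linarith
  calc volume A + volume B = volume (A + {b}) + volume ({a} + B) := by simp
    _ = volume ((A + {b}) ∪ ({a} + B)) :=
      (measure_union₀ (isCompact_singleton.add hB).measurableSet.nullMeasurableSet h_disj).symm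
    _ ≤ volume (A + B) := measure_mono <| union_subset
      (add_subset_add_left (singleton_subset_iff.2 hb))
      (add_subset_add_right (singleton_subset_iff.2 ha))

theorem volume_add_le_volume_add {A B : Set ℝ} (hA : MeasurableSet A) (hB : MeasurableSet B)
    (hA₀ : A.Nonempty) (hB₀ : B.Nonempty) : volume A + volume B ≤ volume (A + B) := by
  obtain ⟨a, ha⟩ := hA₀
  obtain ⟨b, hb⟩ := hB₀
  simp only [hA.measure_eq_iSup_isCompact, hB.measure_eq_iSup_isCompact, iSup_and']
  refine ENNReal.biSup_add_biSup_le' ⟨∅, by simp⟩ ⟨∅, by simp⟩ fun S hS T hT ↦ ?_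
  calc volume S + volume T ≤ volume (insert a S) + volume (insert b T) := by gcongr <;> simp
    _ ≤ volume (insert a S + insert b T) := volume_add_le_volume_add_of_isCompact
      (hS.2.insert a) (hT.2.insert b) (insert_nonempty _ _) (insert_nonempty _ _)
    _ ≤ volume (A + B) := measure_mono <|
      add_subset_add (insert_subset ha hS.1) (insert_subset hb hT.1)

theorem volume_Ioi_inter_setOf_ofReal_lt (c : ℝ≥0∞) :
    volume (Ioi 0 ∩ {s : ℝ | ENNReal.ofReal s < c}) = c := by
  induction c with
  | top => simp
  | coe c =>
    have : Ioi 0 ∩ {s : ℝ | ENNReal.ofReal s < c} = Ioo 0 (c : ℝ) := by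
      ext s
      refine and_congr_right fun hs ↦ ?_
      rw [mem_ofPred_eq, ← ENNReal.ofReal_coe_nnreal,
        ENNReal.ofReal_lt_ofReal_iff_of_nonneg (le_of_lt hs)]
    simp [this]

theorem lintegral_eq_lintegral_measure_ofReal_lt {α : Type*} [MeasurableSpace α] {μ : Measure α}
    [SFinite μ] {f : α → ℝ≥0∞} (hf : Measurable f) :
    ∫⁻ x, f x ∂μ = ∫⁻ s in Ioi 0, μ {x | ENNReal.ofReal s < f x} := by
  have h_meas : MeasurableSet {p : α × ℝ | p.2 ∈ Ioi 0 ∧ ENNReal.ofReal p.2 < f p.1} :=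
    (measurable_snd measurableSet_Ioi).inter (measurableSet_lt
      (ENNReal.measurable_ofReal.comp measurable_snd) (hf.comp measurable_fst))
  calc ∫⁻ x, f x ∂μ
      = (μ.prod volume) {p : α × ℝ | p.2 ∈ Ioi 0 ∧ ENNReal.ofReal p.2 < f p.1} := by
        rw [Measure.prod_apply h_meas]
        exact lintegral_congr fun x ↦ (volume_Ioi_inter_setOf_ofReal_lt (f x)).symm
    _ = ∫⁻ s in Ioi 0, μ {x | ENNReal.ofReal s < f x} := by
        rw [Measure.prod_apply_symm h_meas, ← lintegral_indicator measurableSet_Ioi]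
        refine lintegral_congr fun s ↦ ?_
        by_cases hs : 0 < s <;> simp [hs]

theorem rpow_mul_rpow_le_add {t : ℝ} (ht₀ : 0 < t) (ht₁ : t < 1) (a b : ℝ≥0∞) :
    a ^ (1 - t) * b ^ t ≤ ENNReal.ofReal (1 - t) * a + ENNReal.ofReal t * b := by
  have ht : 0 < 1 - t := sub_pos.2 ht₁
  induction a with
  | top => rw [ENNReal.mul_top (by simpa using ht)]; simp
  | coe a =>
    induction b with
    | top => rw [ENNReal.mul_top (by simpa using ht₀)]; simp
    | coe b =>
      have h := NNReal.geom_mean_le_arith_mean2_weighted (1 - t).toNNReal t.toNNReal a b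
        (by rw [← Real.toNNReal_add ht.le ht₀.le]; simp)
      rw [Real.coe_toNNReal _ ht.le, Real.coe_toNNReal _ ht₀.le] at h
      rw [← ENNReal.coe_rpow_of_nonneg _ ht.le, ← ENNReal.coe_rpow_of_nonneg _ ht₀.le]
      unfold ENNReal.ofReal
      exact_mod_cast h

/-- The Prékopa–Leindler inequality for the measure `μ`: the functional form of the
Brunn–Minkowski inequality, stated as a property of measures because it passes to products and to
images under linear maps. -/
def SatisfiesPrekopaLeindler {E : Type*} [AddCommGroup E] [Module ℝ E] [MeasurableSpace E]
    (μ : Measure E) : Prop :=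
  ∀ ⦃t : ℝ⦄, 0 < t → t < 1 → ∀ ⦃f g h : E → ℝ≥0∞⦄, Measurable f → Measurable g → Measurable h →
    (∀ x y, f x ^ (1 - t) * g y ^ t ≤ h ((1 - t) • x + t • y)) →
    (∫⁻ x, f x ∂μ) ^ (1 - t) * (∫⁻ x, g x ∂μ) ^ t ≤ ∫⁻ x, h x ∂μ

section Real

variable {t : ℝ} {f g h : ℝ → ℝ≥0∞}

theorem add_measure_superlevel_le (ht₀ : 0 < t) (ht₁ : t < 1) (hf : Measurable f)
    (hg : Measurable g) (hf_sup : ⨆ x, f x = 1) (hg_sup : ⨆ x, g x = 1)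
    (hfgh : ∀ x y, f x ^ (1 - t) * g y ^ t ≤ h ((1 - t) • x + t • y)) {s : ℝ} (hs : 0 < s) :
    ENNReal.ofReal (1 - t) * volume {x | ENNReal.ofReal s < f x}
      + ENNReal.ofReal t * volume {x | ENNReal.ofReal s < g x}
      ≤ volume {x | ENNReal.ofReal s < h x} := by
  have ht : 0 < 1 - t := sub_pos.2 ht₁
  have h_smul (c : ℝ) (hc : 0 < c) (A : Set ℝ) :
      ENNReal.ofReal c * volume A = volume (c • A) := by
    simp [Measure.addHaar_smul, abs_of_pos hc]
  rcases lt_or_ge (ENNReal.ofReal s) 1 with hs₁ | hs₁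
  · rw [h_smul _ ht, h_smul _ ht₀]
    refine (volume_add_le_volume_add ((measurableSet_lt measurable_const hf).const_smul₀ _)
      ((measurableSet_lt measurable_const hg).const_smul₀ _)
      (Nonempty.smul_set (lt_iSup_iff.1 (hs₁.trans_eq hf_sup.symm)))
      (Nonempty.smul_set (lt_iSup_iff.1 (hs₁.trans_eq hg_sup.symm)))).trans (measure_mono ?_)
    rintro _ ⟨_, ⟨x, hx, rfl⟩, _, ⟨y, hy, rfl⟩, rfl⟩
    calc ENNReal.ofReal s = ENNReal.ofReal s ^ (1 - t) * ENNReal.ofReal s ^ t := by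
          rw [← ENNReal.rpow_add _ _ (by simpa using hs) (by simp)]; simp
      _ < f x ^ (1 - t) * g y ^ t :=
          ENNReal.mul_lt_mul (ENNReal.rpow_lt_rpow hx ht) (ENNReal.rpow_lt_rpow hy ht₀)
      _ ≤ h ((1 - t) • x + t • y) := hfgh x y
  · have h_empty {φ : ℝ → ℝ≥0∞} (hφ : ⨆ x, φ x = 1) : {x | ENNReal.ofReal s < φ x} = ∅ :=
      eq_empty_of_forall_notMem fun x hx ↦ hx.not_ge ((le_iSup φ x).trans (hφ.trans_le hs₁))
    simp [h_empty hf_sup, h_empty hg_sup]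

theorem prekopaLeindler_of_iSup_eq_one (ht₀ : 0 < t) (ht₁ : t < 1) (hf : Measurable f)
    (hg : Measurable g) (hh : Measurable h) (hf_sup : ⨆ x, f x = 1) (hg_sup : ⨆ x, g x = 1)
    (hfgh : ∀ x y, f x ^ (1 - t) * g y ^ t ≤ h ((1 - t) • x + t • y)) :
    (∫⁻ x, f x) ^ (1 - t) * (∫⁻ x, g x) ^ t ≤ ∫⁻ x, h x := by
  refine (rpow_mul_rpow_le_add ht₀ ht₁ _ _).trans ?_
  rw [lintegral_eq_lintegral_measure_ofReal_lt hf, lintegral_eq_lintegral_measure_ofReal_lt hg,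
    lintegral_eq_lintegral_measure_ofReal_lt hh, ← lintegral_const_mul' _ _ (by simp),
    ← lintegral_const_mul' _ _ (by simp)]
  exact (le_lintegral_add _ _).trans <| setLIntegral_mono' measurableSet_Ioi fun s hs ↦
    add_measure_superlevel_le ht₀ ht₁ hf hg hf_sup hg_sup hfgh hs

theorem prekopaLeindler_of_iSup_ne_top (ht₀ : 0 < t) (ht₁ : t < 1) (hf : Measurable f)
    (hg : Measurable g) (hh : Measurable h) (hf_top : ⨆ x, f x ≠ ∞) (hg_top : ⨆ x, g x ≠ ∞)
    (hfgh : ∀ x y, f x ^ (1 - t) * g y ^ t ≤ h ((1 - t) • x + t • y)) :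
    (∫⁻ x, f x) ^ (1 - t) * (∫⁻ x, g x) ^ t ≤ ∫⁻ x, h x := by
  have ht : 0 < 1 - t := sub_pos.2 ht₁
  set F := ⨆ x, f x
  set G := ⨆ x, g x
  rcases eq_or_ne F 0 with hF | hF
  · simp [ENNReal.iSup_eq_zero.1 hF, ENNReal.zero_rpow_of_pos ht]
  rcases eq_or_ne G 0 with hG | hG
  · simp [ENNReal.iSup_eq_zero.1 hG, ENNReal.zero_rpow_of_pos ht₀]
  have hF_top : F ^ (1 - t) ≠ ∞ := ENNReal.rpow_ne_top_of_nonneg ht.le hf_top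
  have hG_top : G ^ t ≠ ∞ := ENNReal.rpow_ne_top_of_nonneg ht₀.le hg_top
  set M := F ^ (1 - t) * G ^ t with hM
  have hM₀ : M ≠ 0 := by simp [hM, hF, hG, hf_top, hg_top]
  have hM_top : M ≠ ∞ := ENNReal.mul_ne_top hF_top hG_top
  have h_scale (a b : ℝ≥0∞) :
      (F⁻¹ * a) ^ (1 - t) * (G⁻¹ * b) ^ t = M⁻¹ * (a ^ (1 - t) * b ^ t) := by
    rw [ENNReal.mul_rpow_of_nonneg _ _ ht.le, ENNReal.mul_rpow_of_nonneg _ _ ht₀.le,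
      ENNReal.inv_rpow, ENNReal.inv_rpow, mul_mul_mul_comm, hM,
      ENNReal.mul_inv (.inr hG_top) (.inl hF_top)]
  have key := prekopaLeindler_of_iSup_eq_one ht₀ ht₁ (hf.const_mul F⁻¹) (hg.const_mul G⁻¹)
    (hh.const_mul M⁻¹) (by rw [← ENNReal.mul_iSup, ENNReal.inv_mul_cancel hF hf_top])
    (by rw [← ENNReal.mul_iSup, ENNReal.inv_mul_cancel hG hg_top])
    (fun x y ↦ by rw [h_scale]; gcongr; exact hfgh x y)
  rw [lintegral_const_mul _ hf, lintegral_const_mul _ hg, lintegral_const_mul _ hh, h_scale] at key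
  exact (ENNReal.mul_le_mul_iff_right (ENNReal.inv_ne_zero.2 hM_top)
    (ENNReal.inv_ne_top.2 hM₀)).1 key

end Real

theorem lintegral_eq_iSup_lintegral_min_natCast {α : Type*} [MeasurableSpace α] {μ : Measure α}
    {f : α → ℝ≥0∞} (hf : Measurable f) : ∫⁻ x, f x ∂μ = ⨆ N : ℕ, ∫⁻ x, min (f x) N ∂μ := by
  rw [← lintegral_iSup (fun N ↦ hf.min measurable_const)
    fun a b hab x ↦ min_le_min le_rfl (by exact_mod_cast hab)]
  refine lintegral_congr fun x ↦ ?_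
  rw [← inf_iSup_eq, ENNReal.iSup_natCast, inf_top_eq]

theorem satisfiesPrekopaLeindler_volume_real :
    SatisfiesPrekopaLeindler (volume : Measure ℝ) := by
  intro t ht₀ ht₁ f g h hf hg hh hfgh
  have h_iSup {s : ℝ} (hs : 0 < s) {φ : ℝ → ℝ≥0∞} (hφ : Measurable φ) :
      (∫⁻ x, φ x) ^ s = ⨆ N : ℕ, (∫⁻ x, min (φ x) N) ^ s := by
    rw [lintegral_eq_iSup_lintegral_min_natCast hφ]
    exact (ENNReal.orderIsoRpow _ hs).map_iSup _
  rw [h_iSup (sub_pos.2 ht₁) hf, h_iSup ht₀ hg]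
  simp only [ENNReal.iSup_mul, ENNReal.mul_iSup]
  refine iSup₂_le fun M N ↦ ?_
  refine prekopaLeindler_of_iSup_ne_top ht₀ ht₁ (hf.min measurable_const)
    (hg.min measurable_const) hh
    (ne_top_of_le_ne_top (ENNReal.natCast_ne_top N) (iSup_le fun x ↦ min_le_right _ _))
    (ne_top_of_le_ne_top (ENNReal.natCast_ne_top M) (iSup_le fun x ↦ min_le_right _ _))
    fun x y ↦ ?_
  refine le_trans ?_ (hfgh x y)
  have := sub_pos.2 ht₁
  gcongr <;> exact min_le_left _ _

namespace SatisfiesPrekopaLeindler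

variable {E F : Type*} [AddCommGroup E] [Module ℝ E] [MeasurableSpace E] [AddCommGroup F]
  [Module ℝ F] [MeasurableSpace F] {μ : Measure E} {ν : Measure F}

theorem prod [SFinite μ] [SFinite ν] (hμ : SatisfiesPrekopaLeindler μ)
    (hν : SatisfiesPrekopaLeindler ν) : SatisfiesPrekopaLeindler (μ.prod ν) := by
  intro t ht₀ ht₁ f g h hf hg hh hfgh
  rw [lintegral_prod _ hf.aemeasurable, lintegral_prod _ hg.aemeasurable,
    lintegral_prod _ hh.aemeasurable]
  exact hμ ht₀ ht₁ hf.lintegral_prod_right' hg.lintegral_prod_right' hh.lintegral_prod_right'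
    fun x y ↦ hν ht₀ ht₁ (by fun_prop) (by fun_prop) (by fun_prop) fun a b ↦ hfgh (x, a) (y, b)

theorem map (hμ : SatisfiesPrekopaLeindler μ) (L : E →ₗ[ℝ] F) (hL : Measurable L) :
    SatisfiesPrekopaLeindler (μ.map L) := by
  intro t ht₀ ht₁ f g h hf hg hh hfgh
  rw [lintegral_map hf hL, lintegral_map hg hL, lintegral_map hh hL]
  refine hμ ht₀ ht₁ (hf.comp hL) (hg.comp hL) (hh.comp hL) fun x y ↦ ?_
  simpa using hfgh (L x) (L y)

theorem smul (hμ : SatisfiesPrekopaLeindler μ) (c : NNReal) :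
    SatisfiesPrekopaLeindler (c • μ) := by
  intro t ht₀ ht₁ f g h hf hg hh hfgh
  have ht : 0 < 1 - t := sub_pos.2 ht₁
  rcases eq_or_ne c 0 with rfl | hc
  · simp [ht]
  have hc_rpow : (c : ℝ≥0∞) ^ (1 - t) * (c : ℝ≥0∞) ^ t = c := by
    rw [← ENNReal.rpow_add _ _ (by simpa using hc) (by simp)]; simp
  simp only [lintegral_smul_measure, ENNReal.smul_def, smul_eq_mul]
  rw [ENNReal.mul_rpow_of_nonneg _ _ ht.le, ENNReal.mul_rpow_of_nonneg _ _ ht₀.le,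
    mul_mul_mul_comm, hc_rpow]
  gcongr
  exact hμ ht₀ ht₁ hf hg hh hfgh

end SatisfiesPrekopaLeindler

theorem satisfiesPrekopaLeindler_volume_pi (n : ℕ) :
    SatisfiesPrekopaLeindler (volume : Measure (Fin n → ℝ)) := by
  induction n with
  | zero =>
    intro t _ _ f g h _ _ _ hfgh
    simpa [volume_pi, Measure.pi_of_empty (x := 0)] using hfgh 0 0
  | succ n ih =>
    let e := MeasurableEquiv.piFinSuccAbove (fun _ : Fin (n + 1) ↦ ℝ) 0
    let L : ℝ × (Fin n → ℝ) →ₗ[ℝ] Fin (n + 1) → ℝ := (Fin.consLinearEquiv ℝ fun _ ↦ ℝ).toLinearMap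
    have hL : ⇑L = e.symm := funext fun p ↦ funext fun i ↦ Fin.cases rfl (fun _ ↦ rfl) i
    have h := (satisfiesPrekopaLeindler_volume_real.prod ih).map L (hL ▸ e.symm.measurable)
    rwa [hL, ← Measure.volume_eq_prod,
      (volume_preserving_piFinSuccAbove (fun _ : Fin (n + 1) ↦ ℝ) 0).symm.map_eq] at h

theorem measureReal_le_measureReal_add {V : Type*} [NormedAddCommGroup V]
    [MeasurableSpace V] [BorelSpace V] {μ : Measure V} [μ.IsAddHaarMeasure] {A B : Set V}
    (hA : IsCompact A) (hB : IsCompact B) (hA₀ : A.Nonempty) : μ.real B ≤ μ.real (A + B) := by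
  obtain ⟨a, ha⟩ := hA₀
  calc μ.real B = μ.real ({a} + B) := by simp [measureReal_def]
    _ ≤ μ.real (A + B) := measureReal_mono (add_subset_add_right (singleton_subset_iff.2 ha))
      (hA.add hB).measure_lt_top.ne

section AddHaar

variable {V : Type*} [NormedAddCommGroup V] [NormedSpace ℝ V] [FiniteDimensional ℝ V]
  [MeasurableSpace V] [BorelSpace V] (μ : Measure V) [μ.IsAddHaarMeasure]

theorem satisfiesPrekopaLeindler_of_isAddHaarMeasure : SatisfiesPrekopaLeindler μ := by
  let e : (Fin (finrank ℝ V) → ℝ) ≃L[ℝ] V :=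
    ContinuousLinearEquiv.ofFinrankEq (by simp)
  have := e.isAddHaarMeasure_map (volume : Measure (Fin (finrank ℝ V) → ℝ))
  rw [Measure.isAddLeftInvariant_eq_smul μ (volume.map e)]
  exact ((satisfiesPrekopaLeindler_volume_pi _).map e.toLinearMap e.continuous.measurable).smul _

variable {μ}

/-! ### The Brunn–Minkowski inequality -/

theorem measure_rpow_mul_measure_rpow_le {t : ℝ} (ht₀ : 0 < t) (ht₁ : t < 1) {A B C : Set V}
    (hA : MeasurableSet A) (hB : MeasurableSet B) (hC : MeasurableSet C)
    (hABC : ∀ a ∈ A, ∀ b ∈ B, (1 - t) • a + t • b ∈ C) :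
    μ A ^ (1 - t) * μ B ^ t ≤ μ C := by
  have ht : 0 < 1 - t := sub_pos.2 ht₁
  have key := satisfiesPrekopaLeindler_of_isAddHaarMeasure μ ht₀ ht₁
    (measurable_one.indicator hA) (measurable_one.indicator hB) (measurable_one.indicator hC)
    fun x y ↦ ?_
  · simpa [lintegral_indicator_one, hA, hB, hC] using key
  by_cases hx : x ∈ A
  · by_cases hy : y ∈ B
    · simp [hx, hy, hABC x hx y hy]
    · simp [hy, ENNReal.zero_rpow_of_pos ht₀]
  · simp [hx, ENNReal.zero_rpow_of_pos ht]

theorem measure_rpow_half_mul_measure_rpow_half_le {A B C : Set V} (hA : MeasurableSet A)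
    (hB : MeasurableSet B) (hC : MeasurableSet C) (hABC : ∀ a ∈ A, ∀ b ∈ B, midpoint ℝ a b ∈ C) :
    μ A ^ (2⁻¹ : ℝ) * μ B ^ (2⁻¹ : ℝ) ≤ μ C := by
  have h_half : (1 : ℝ) - 2⁻¹ = 2⁻¹ := by norm_num
  have := measure_rpow_mul_measure_rpow_le (μ := μ) (t := 2⁻¹) (by norm_num) (by norm_num)
    hA hB hC fun a ha b hb ↦ by
      simpa [midpoint_eq_smul_add, smul_add, h_half] using hABC a ha b hb
  rwa [h_half] at this

theorem measure_mul_measure_le_sq {A B C : Set V} (hA : MeasurableSet A) (hB : MeasurableSet B)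
    (hC : MeasurableSet C) (hABC : ∀ a ∈ A, ∀ b ∈ B, midpoint ℝ a b ∈ C) :
    μ A * μ B ≤ μ C ^ 2 :=
  calc μ A * μ B = (μ A ^ (2⁻¹ : ℝ) * μ B ^ (2⁻¹ : ℝ)) ^ 2 := by
        rw [mul_pow, ← ENNReal.rpow_natCast, ← ENNReal.rpow_natCast, ← ENNReal.rpow_mul,
          ← ENNReal.rpow_mul]
        norm_num
    _ ≤ μ C ^ 2 := by
        gcongr
        exact measure_rpow_half_mul_measure_rpow_half_le hA hB hC hABC

variable [Nontrivial V]

theorem measureReal_smul_rpow_inv_finrank {c : ℝ} (hc : 0 ≤ c) (A : Set V) :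
    μ.real (c • A) ^ (finrank ℝ V : ℝ)⁻¹ = c * μ.real A ^ (finrank ℝ V : ℝ)⁻¹ := by
  rw [Measure.real, Measure.addHaar_smul, ENNReal.toReal_mul,
    ENNReal.toReal_ofReal (abs_nonneg _), abs_of_nonneg (by positivity),
    Real.mul_rpow (by positivity) (by positivity), Real.pow_rpow_inv_natCast hc finrank_pos.ne',
    Measure.real]

theorem measure_smul_eq_ofReal_pow {c r : ℝ} (hc : 0 ≤ c) {S : Set V} (hS : IsCompact S)
    (hr : c * μ.real S ^ (finrank ℝ V : ℝ)⁻¹ = r) :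
    μ (c • S) = ENNReal.ofReal (r ^ finrank ℝ V) := by
  rw [← hr, ← measureReal_smul_rpow_inv_finrank hc,
    Real.rpow_inv_natCast_pow measureReal_nonneg finrank_pos.ne',
    ofReal_measureReal (hS.smul c).measure_lt_top.ne]

theorem brunnMinkowski {A B : Set V} (hA : IsCompact A) (hB : IsCompact B) (hA₀ : A.Nonempty)
    (hB₀ : B.Nonempty) :
    μ.real A ^ (finrank ℝ V : ℝ)⁻¹ + μ.real B ^ (finrank ℝ V : ℝ)⁻¹
      ≤ μ.real (A + B) ^ (finrank ℝ V : ℝ)⁻¹ := by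
  set a := μ.real A ^ (finrank ℝ V : ℝ)⁻¹ with ha
  set b := μ.real B ^ (finrank ℝ V : ℝ)⁻¹ with hb
  rcases (show 0 ≤ a by positivity).eq_or_lt with ha₀ | ha₀
  · rw [← ha₀, zero_add]
    exact Real.rpow_le_rpow measureReal_nonneg (measureReal_le_measureReal_add hA hB hA₀)
      (by positivity)
  rcases (show 0 ≤ b by positivity).eq_or_lt with hb₀ | hb₀
  · rw [← hb₀, add_zero, add_comm A]
    exact Real.rpow_le_rpow measureReal_nonneg (measureReal_le_measureReal_add hB hA hB₀)
      (by positivity)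
  set t := b / (a + b) with ht
  have ht₁ : 1 - t = a / (a + b) := by rw [ht]; field_simp; ring
  have ht' : 0 < 1 - t := by rw [ht₁]; positivity
  have ht₀ : 0 < t := by positivity
  -- With this `t` both dilates `(1 - t)⁻¹ • A` and `t⁻¹ • B` have measure `(a + b) ^ dim V`.
  have key := measure_rpow_mul_measure_rpow_le (μ := μ) ht₀ (sub_pos.1 ht')
    (hA.smul (1 - t)⁻¹).measurableSet (hB.smul t⁻¹).measurableSet (hA.add hB).measurableSet (by
      rintro _ ⟨x, hx, rfl⟩ _ ⟨y, hy, rfl⟩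
      rw [smul_inv_smul₀ ht'.ne', smul_inv_smul₀ ht₀.ne']
      exact add_mem_add hx hy)
  rw [measure_smul_eq_ofReal_pow (inv_pos.2 ht').le hA (r := a + b) (by rw [ht₁, ← ha]; field_simp),
    measure_smul_eq_ofReal_pow (inv_pos.2 ht₀).le hB (r := a + b) (by rw [ht, ← hb]; field_simp),
    ← ENNReal.rpow_add_of_nonneg _ _ ht'.le ht₀.le, sub_add_cancel, ENNReal.rpow_one,
    ENNReal.ofReal_le_iff_le_toReal (hA.add hB).measure_lt_top.ne] at key
  calc a + b = ((a + b) ^ finrank ℝ V) ^ (finrank ℝ V : ℝ)⁻¹ :=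
        (Real.pow_rpow_inv_natCast (by positivity) finrank_pos.ne').symm
    _ ≤ μ.real (A + B) ^ (finrank ℝ V : ℝ)⁻¹ := by gcongr; exact key

end AddHaar

/-! ### Concave families of sets over a body with barycenter zero -/

section Supergradient

theorem isOpen_strictHypograph {E : Type*} [TopologicalSpace E] {U : Set E} (hU : IsOpen U)
    {g : E → ℝ} (hg : ContinuousOn g U) : IsOpen {p : E × ℝ | p.1 ∈ U ∧ p.2 < g p.1} := by
  have hcont : ContinuousOn (fun p : E × ℝ ↦ g p.1 - p.2) (Prod.fst ⁻¹' U) :=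
    (hg.comp continuousOn_fst fun _ hx ↦ hx).sub continuousOn_snd
  convert hcont.isOpen_inter_preimage (hU.preimage continuous_fst) (isOpen_Ioi (a := (0 : ℝ)))
    using 1
  ext p
  simp

variable {E : Type*} [NormedAddCommGroup E] [NormedSpace ℝ E] [FiniteDimensional ℝ E]

theorem exists_supergradient_of_isOpen {U : Set E} (hU : IsOpen U) {x₀ : E} (hx₀ : x₀ ∈ U)
    {g : E → ℝ} (hg : ConcaveOn ℝ U g) :
    ∃ l : E →L[ℝ] ℝ, ∀ x ∈ U, g x ≤ g x₀ + l (x - x₀) := by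
  obtain ⟨f, hf⟩ := geometric_hahn_banach_open_point hg.convex_strict_hypograph
    (isOpen_strictHypograph hU (hg.continuousOn hU)) (x := (x₀, g x₀)) (by simp)
  set c := f (0, 1) with hc
  have f_eq (x : E) (s : ℝ) : f (x, s) = f (x, 0) + s * c := by
    rw [hc, ← smul_eq_mul, ← map_smul, ← map_add]
    simp
  have hc_pos : 0 < c := by
    have := hf (x₀, g x₀ - 1) ⟨hx₀, by simp⟩
    rw [f_eq, f_eq x₀ (g x₀)] at this
    linarith
  have f_le (x : E) (hx : x ∈ U) : f (x, g x) ≤ f (x₀, g x₀) := by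
    refine le_of_forall_pos_le_add fun δ hδ ↦ ?_
    have := hf (x, g x - δ / c) ⟨hx, by simp only [sub_lt_self_iff]; positivity⟩
    rw [f_eq, sub_mul, div_mul_cancel₀ _ hc_pos.ne'] at this
    rw [f_eq]
    linarith
  refine ⟨-(c⁻¹ • f.comp (.inl ℝ E ℝ)), fun x hx ↦ ?_⟩
  have := f_le x hx
  rw [f_eq, f_eq x₀] at this
  have h_sub : f (x - x₀, 0) = f (x, 0) - f (x₀, 0) := by rw [← map_sub]; simp
  have h_div : g x ≤ g x₀ - c⁻¹ * (f (x, 0) - f (x₀, 0)) := by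
    rw [le_sub_iff_add_le, inv_mul_eq_div, ← le_sub_iff_add_le', div_le_iff₀ hc_pos]
    linarith
  simpa only [neg_apply, smul_apply, ContinuousLinearMap.comp_apply,
    ContinuousLinearMap.inl_apply, h_sub, smul_eq_mul, ← sub_eq_add_neg] using h_div

theorem exists_supergradient {s : Set E} {x₀ : E} (hx₀ : x₀ ∈ interior s) {g : E → ℝ}
    (hg : ConcaveOn ℝ s g) : ∃ l : E →L[ℝ] ℝ, ∀ x ∈ s, g x ≤ g x₀ + l (x - x₀) := by
  obtain ⟨l, hl⟩ := exists_supergradient_of_isOpen isOpen_interior hx₀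
    (hg.subset interior_subset hg.1.interior)
  refine ⟨l, fun x hx ↦ ?_⟩
  have half_pos : (0 : ℝ) < 2⁻¹ := by norm_num
  have hmem : (2⁻¹ : ℝ) • x₀ + (2⁻¹ : ℝ) • x ∈ interior s :=
    hg.1.combo_interior_self_mem_interior hx₀ hx half_pos half_pos.le (by norm_num)
  have h_upper := hl _ hmem
  have h_lower := hg.2 (interior_subset hx₀) hx half_pos.le half_pos.le (by norm_num)
  rw [show (2⁻¹ : ℝ) • x₀ + (2⁻¹ : ℝ) • x - x₀ = (2⁻¹ : ℝ) • (x - x₀) by module, map_smul]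
    at h_upper
  simp only [smul_eq_mul] at h_upper h_lower
  linarith

variable [MeasurableSpace E] [BorelSpace E] {ρ : Measure E} [IsFiniteMeasureOnCompacts ρ]

theorem measure_le_two_mul_measure_inter_le {s : Set E} (hs : IsCompact s)
    (hbar : ∫ x in s, x ∂ρ = 0) (l : E →L[ℝ] ℝ) {r : ℝ} (hr : 0 < r) (hl : ∀ x ∈ s, 0 ≤ r + l x) :
    ρ s ≤ 2 * ρ (s ∩ {x | l x ≤ r}) := by
  have integrableOn {f : E → ℝ} (hf : Continuous f) : IntegrableOn f s ρ :=
    hf.continuousOn.integrableOn_compact hs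
  have integral_eq : ∫ x in s, (r + l x) ∂ρ = r * ρ.real s := by
    rw [integral_add (integrableOn continuous_const) (integrableOn l.continuous),
      l.integral_comp_comm (continuousOn_id.integrableOn_compact hs : IntegrableOn (·) s ρ), hbar]
    simp [mul_comm]
  have markov := mul_meas_ge_le_integral_of_nonneg (μ := ρ.restrict s) (f := fun x ↦ r + l x)
    ((ae_restrict_iff' hs.measurableSet).2 (.of_forall hl)) (integrableOn (by fun_prop)) (2 * r)
  have compl_le : ρ.real (s \ {x | l x ≤ r}) ≤ (ρ.restrict s).real {x | 2 * r ≤ r + l x} := by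
    rw [measureReal_restrict_apply (measurableSet_le measurable_const (by fun_prop))]
    refine measureReal_mono (fun x ⟨hx, hxr⟩ ↦ ⟨?_, hx⟩)
      (measure_ne_top_of_subset inter_subset_right hs.measure_ne_top)
    rw [mem_ofPred_eq, not_le] at hxr
    rw [mem_ofPred_eq]
    linarith
  have split := measureReal_inter_add_sdiff (μ := ρ) (s := s)
    (isClosed_le l.continuous (continuous_const (y := r))).measurableSet hs.measure_ne_top
  have real_le : ρ.real s ≤ 2 * ρ.real (s ∩ {x | l x ≤ r}) := by
    rw [integral_eq] at markov
    nlinarith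
  rw [← ENNReal.toReal_le_toReal hs.measure_ne_top (ENNReal.mul_ne_top ENNReal.ofNat_ne_top
    (measure_ne_top_of_subset inter_subset_left hs.measure_ne_top)), ENNReal.toReal_mul]
  simpa [Measure.real] using real_le

theorem exists_subset_forall_le_two_mul {s : Set E} (hs : IsCompact s) (h0 : 0 ∈ interior s)
    (hbar : ∫ x in s, x ∂ρ = 0) {g : E → ℝ} (hg : ConcaveOn ℝ s g) (hg₀ : ∀ x ∈ s, 0 ≤ g x)
    (hpos : 0 < g 0) :
    ∃ L ⊆ s, IsCompact L ∧ Convex ℝ L ∧ ρ s ≤ 2 * ρ L ∧ ∀ x ∈ L, g x ≤ 2 * g 0 := by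
  obtain ⟨l, hl⟩ := exists_supergradient h0 hg
  simp only [sub_zero] at hl
  refine ⟨s ∩ {x | l x ≤ g 0}, inter_subset_left,
    hs.inter_right (isClosed_le l.continuous continuous_const),
    hg.1.inter (convex_halfSpace_le l.toLinearMap.isLinear _),
    measure_le_two_mul_measure_inter_le hs hbar l hpos fun x hx ↦ (hg₀ x hx).trans (hl x hx),
    fun x ⟨hx, hxl⟩ ↦ ?_⟩
  rw [mem_ofPred_eq] at hxl
  linarith [hl x hx]

end Supergradient

/-- A set-valued map `S` is concave on the convex set `K` when its graph over `K` is convex. -/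
def SetConcaveOn {E V : Type*} [AddCommGroup E] [Module ℝ E] [AddCommGroup V] [Module ℝ V]
    (K : Set E) (S : E → Set V) : Prop :=
  Convex ℝ K ∧ ∀ ⦃p⦄, p ∈ K → ∀ ⦃q⦄, q ∈ K → ∀ ⦃a b : ℝ⦄, 0 ≤ a → 0 ≤ b → a + b = 1 →
    a • S p + b • S q ⊆ S (a • p + b • q)

namespace SetConcaveOn

section Maps

variable {E V W : Type*} [AddCommGroup E] [Module ℝ E] [AddCommGroup V] [Module ℝ V]
  [AddCommGroup W] [Module ℝ W] {K : Set E} {S : E → Set V}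

protected theorem image (hS : SetConcaveOn K S) (f : V →ₗ[ℝ] W) :
    SetConcaveOn K fun p ↦ f '' S p := by
  refine ⟨hS.1, fun p hp q hq a b ha hb hab ↦ ?_⟩
  rw [← image_smul_set, ← image_smul_set, ← image_add]
  exact image_mono (hS.2 hp hq ha hb hab)

protected theorem preimage (hS : SetConcaveOn K S) (f : W →ₗ[ℝ] V) :
    SetConcaveOn K fun p ↦ f ⁻¹' S p := by
  refine ⟨hS.1, fun p hp q hq a b ha hb hab ↦ ?_⟩
  rintro _ ⟨_, ⟨u, hu, rfl⟩, _, ⟨w, hw, rfl⟩, rfl⟩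
  refine hS.2 hp hq ha hb hab ?_
  rw [map_add, map_smul, map_smul]
  exact add_mem_add (smul_mem_smul_set hu) (smul_mem_smul_set hw)

end Maps

variable {E V : Type*} [NormedAddCommGroup E] [NormedSpace ℝ E]
  [NormedAddCommGroup V] [NormedSpace ℝ V] [FiniteDimensional ℝ V] [MeasurableSpace V]
  [BorelSpace V] [Nontrivial V] {μ : Measure V} [μ.IsAddHaarMeasure] {K : Set E} {S : E → Set V}

theorem concaveOn_measureReal_rpow (hS : SetConcaveOn K S) (hSc : ∀ p ∈ K, IsCompact (S p))
    (hSne : ∀ p ∈ K, (S p).Nonempty) :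
    ConcaveOn ℝ K fun p ↦ μ.real (S p) ^ (finrank ℝ V : ℝ)⁻¹ := by
  refine ⟨hS.1, fun p hp q hq a b ha hb hab ↦ ?_⟩
  simp only [smul_eq_mul]
  rw [← measureReal_smul_rpow_inv_finrank ha, ← measureReal_smul_rpow_inv_finrank hb]
  refine (brunnMinkowski ((hSc p hp).smul a) ((hSc q hq).smul b) (hSne p hp).smul_set
    (hSne q hq).smul_set).trans ?_
  exact Real.rpow_le_rpow measureReal_nonneg (measureReal_mono (hS.2 hp hq ha hb hab)
    (hSc _ (hS.1 hp hq ha hb hab)).measure_ne_top) (by positivity)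

theorem exists_subset_forall_measure_le [FiniteDimensional ℝ E] [MeasurableSpace E] [BorelSpace E]
    {ρ : Measure E} [IsFiniteMeasureOnCompacts ρ] (hS : SetConcaveOn K S)
    (hSc : ∀ p ∈ K, IsCompact (S p)) (hSne : ∀ p ∈ K, (S p).Nonempty) (hS0 : μ (S 0) ≠ 0)
    (hK : IsCompact K) (h0 : 0 ∈ interior K) (hbar : ∫ x in K, x ∂ρ = 0) :
    ∃ L ⊆ K, IsCompact L ∧ Convex ℝ L ∧ ρ K ≤ 2 * ρ L ∧
      ∀ p ∈ L, μ (S p) ≤ 2 ^ finrank ℝ V * μ (S 0) := by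
  have measure_ne_top {p : E} (hp : p ∈ K) : μ (S p) ≠ ⊤ := (hSc p hp).measure_ne_top
  have h0K : 0 ∈ K := interior_subset h0
  have hpos : 0 < μ.real (S 0) := ENNReal.toReal_pos hS0 (measure_ne_top h0K)
  obtain ⟨L, hLK, hL, hLc, hρ, hle⟩ := exists_subset_forall_le_two_mul hK h0 hbar
    (hS.concaveOn_measureReal_rpow hSc hSne (μ := μ)) (fun _ _ ↦ by positivity) (by positivity)
  refine ⟨L, hLK, hL, hLc, hρ, fun p hp ↦ ?_⟩
  have hpow := pow_le_pow_left₀ (by positivity) (hle p hp) (finrank ℝ V)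
  rw [mul_pow, Real.rpow_inv_natCast_pow measureReal_nonneg finrank_pos.ne',
    Real.rpow_inv_natCast_pow measureReal_nonneg finrank_pos.ne'] at hpow
  rw [← ENNReal.toReal_le_toReal (measure_ne_top (hLK hp))
    (ENNReal.mul_ne_top (by simp) (measure_ne_top h0K)), ENNReal.toReal_mul]
  simpa [Measure.real] using hpow

end SetConcaveOn

section Symmetral

/-- The part of `K` that is symmetric about `p`, translated so that `p` becomes the origin. -/
def symmetral {E : Type*} [AddCommGroup E] (K : Set E) (p : E) : Set E :=
  {q | p + q ∈ K ∧ p - q ∈ K}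

theorem symmetral_zero {E : Type*} [AddCommGroup E] (K : Set E) : symmetral K 0 = K ∩ -K := by
  ext q
  simp [symmetral]

theorem symmetral_mono {E : Type*} [AddCommGroup E] {K L : Set E} (h : K ⊆ L) (p : E) :
    symmetral K p ⊆ symmetral L p :=
  fun _ hq ↦ ⟨h hq.1, h hq.2⟩

variable {E : Type*} [NormedAddCommGroup E] {K : Set E}

theorem isCompact_symmetral (hK : IsCompact K) (p : E) : IsCompact (symmetral K p) := by
  have hcl : IsClosed ((p - ·) ⁻¹' K) := hK.isClosed.preimage (by fun_prop)
  exact ((Homeomorph.addLeft p).isCompact_preimage.2 hK).inter_right hcl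

theorem zero_mem_symmetral {p : E} (hp : p ∈ K) : 0 ∈ symmetral K p := by
  simpa [symmetral] using hp

theorem inter_neg_mem_nhds_zero (h0 : 0 ∈ interior K) : K ∩ -K ∈ nhds 0 := by
  have hK := mem_interior_iff_mem_nhds.1 h0
  exact Filter.inter_mem hK (continuous_neg.continuousAt.preimage_mem_nhds (by rwa [neg_zero]))

variable [NormedSpace ℝ E]

theorem symmetral_eq_empty (hK : Convex ℝ K) {p : E} (hp : p ∉ K) : symmetral K p = ∅ := by
  refine eq_empty_of_forall_notMem fun q hq ↦ hp ?_
  simpa using hK.midpoint_mem hq.1 hq.2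

theorem setConcaveOn_symmetral (hK : Convex ℝ K) : SetConcaveOn K (symmetral K) := by
  refine ⟨hK, fun _ _ _ _ a b ha hb hab ↦ ?_⟩
  rintro _ ⟨_, ⟨u, hu, rfl⟩, _, ⟨w, hw, rfl⟩, rfl⟩
  constructor
  · convert hK hu.1 hw.1 ha hb hab using 1
    module
  · convert hK hu.2 hw.2 ha hb hab using 1
    module

end Symmetral

/-! ### Rogers–Shephard type inequalities -/

theorem isCompact_sub {E : Type*} [AddGroup E] [TopologicalSpace E] [IsTopologicalAddGroup E]
    {A B : Set E} (hA : IsCompact A) (hB : IsCompact B) : IsCompact (A - B) := by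
  rw [← sub_image_prod]
  exact (hA.prod hB).image continuous_sub

section Convolution

variable {V : Type*} [NormedAddCommGroup V] [NormedSpace ℝ V] [FiniteDimensional ℝ V]
  [MeasurableSpace V] [BorelSpace V] {μ : Measure V} [μ.IsAddHaarMeasure]

theorem ofReal_pow_mul_measure_le {c : ℝ} (hc : 0 ≤ c) {A B : Set V} (v : V)
    (h : ∀ w ∈ A, c • w + v ∈ B) : ENNReal.ofReal (c ^ finrank ℝ V) * μ A ≤ μ B := by
  rw [← abs_of_nonneg (pow_nonneg hc _), ← Measure.addHaar_smul, ← measure_preimage_add_right μ v B]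
  refine measure_mono ?_
  rintro _ ⟨w, hw, rfl⟩
  exact h w hw

theorem measure_le_two_pow_mul {A B : Set V} (a : V) (h : ∀ w ∈ A, midpoint ℝ a w ∈ B) :
    μ A ≤ 2 ^ finrank ℝ V * μ B := by
  have key := ofReal_pow_mul_measure_le (μ := μ) (c := 2⁻¹) (by norm_num) ((2⁻¹ : ℝ) • a)
    fun w hw ↦ by simpa [midpoint_eq_smul_add, smul_add, add_comm] using h w hw
  rwa [inv_pow, ENNReal.ofReal_inv_of_pos (by positivity), ENNReal.ofReal_pow (by norm_num),
    ENNReal.ofReal_ofNat, ENNReal.inv_mul_le_iff (by simp) (by simp)] at key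

theorem ofReal_pow_mul_measure_mul_le_lintegral {ε : ℝ} (hε : 0 ≤ ε) {B : Set V}
    (hB : MeasurableSet B) (v : V) {f : V → ℝ≥0∞} {c : ℝ≥0∞} (h : ∀ b ∈ B, c ≤ f (ε • b + v)) :
    ENNReal.ofReal (ε ^ finrank ℝ V) * μ B * c ≤ ∫⁻ x, f x ∂μ :=
  calc ENNReal.ofReal (ε ^ finrank ℝ V) * μ B * c = ∫⁻ _ in ε • B, c ∂μ := by
        rw [setLIntegral_const, Measure.addHaar_smul, abs_of_nonneg (pow_nonneg hε _), mul_comm]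
    _ ≤ ∫⁻ x in ε • B, f (x + v) ∂μ := by
        refine setLIntegral_mono' (hB.const_smul₀ ε) ?_
        rintro _ ⟨b, hb, rfl⟩
        exact h b hb
    _ ≤ ∫⁻ x, f (x + v) ∂μ := setLIntegral_le_lintegral _ _
    _ = ∫⁻ x, f x ∂μ := lintegral_add_right_eq_self f v

theorem lintegral_lintegral_mul_sub {f g : V → ℝ≥0∞} (hf : Measurable f) (hg : Measurable g) :
    ∫⁻ s, ∫⁻ x, f x * g (x - s) ∂μ ∂μ = (∫⁻ x, f x ∂μ) * ∫⁻ x, g x ∂μ := by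
  rw [lintegral_lintegral_swap (by fun_prop), ← lintegral_mul_const _ hf]
  refine lintegral_congr fun x ↦ ?_
  rw [lintegral_const_mul _ (by fun_prop), lintegral_sub_left_eq_self]

theorem lintegral_measure_inter_preimage_sub {A B : Set V} (hA : MeasurableSet A)
    (hB : MeasurableSet B) : ∫⁻ s, μ (A ∩ (· - s) ⁻¹' B) ∂μ = μ A * μ B := by
  rw [← lintegral_indicator_one hA, ← lintegral_indicator_one hB,
    ← lintegral_lintegral_mul_sub (measurable_one.indicator hA) (measurable_one.indicator hB)]
  refine lintegral_congr fun s ↦ ?_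
  rw [← lintegral_indicator_one (hA.inter (hB.preimage (by fun_prop))), inter_indicator_one]
  rfl

theorem two_pow_mul_lintegral_comp_two_smul {f : V → ℝ≥0∞} (hf : Measurable f) :
    2 ^ finrank ℝ V * ∫⁻ x, f ((2 : ℝ) • x) ∂μ = ∫⁻ x, f x ∂μ := by
  rw [← lintegral_map hf (measurable_const_smul (2 : ℝ)),
    Measure.map_addHaar_smul _ two_ne_zero, lintegral_smul_measure, smul_eq_mul, ← mul_assoc,
    abs_of_pos (by positivity), ENNReal.ofReal_inv_of_pos (by positivity),
    ENNReal.ofReal_pow (by norm_num), ENNReal.ofReal_ofNat,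
    ENNReal.mul_inv_cancel (by simp) (by simp), one_mul]

theorem two_pow_mul_lintegral_lintegral_add_mul_sub {f g : V → ℝ≥0∞} (hf : Measurable f)
    (hg : Measurable g) :
    2 ^ finrank ℝ V * ∫⁻ x, ∫⁻ u, f (x + u) * g (x - u) ∂μ ∂μ
      = (∫⁻ x, f x ∂μ) * ∫⁻ x, g x ∂μ := by
  have shift (u : V) :
      ∫⁻ x, f (x + u) * g (x - u) ∂μ = ∫⁻ x, f x * g (x - (2 : ℝ) • u) ∂μ := by
    rw [← lintegral_add_right_eq_self (fun x ↦ f x * g (x - (2 : ℝ) • u)) u]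
    simp only [two_smul, add_sub_add_right_eq_sub]
  rw [lintegral_lintegral_swap (by fun_prop), ← lintegral_lintegral_mul_sub hf hg,
    ← two_pow_mul_lintegral_comp_two_smul (f := fun s ↦ ∫⁻ x, f x * g (x - s) ∂μ) (by fun_prop)]
  simp only [shift]

theorem measure_le_two_pow_mul_of_measure_symmetral_le {A : Set V} (hA : IsCompact A)
    (hAc : Convex ℝ A) {c : ℝ≥0∞} (hc : ∀ x ∈ A, μ (symmetral A x) ≤ c) :
    μ A ≤ 2 ^ finrank ℝ V * c := by
  have hm := hA.measurableSet
  have lintegral_eq (x : V) :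
      ∫⁻ u, A.indicator 1 (x + u) * A.indicator 1 (x - u) ∂μ = μ (symmetral A x) := by
    have symmetral_eq : symmetral A x = (x + ·) ⁻¹' A ∩ (x - ·) ⁻¹' A := rfl
    rw [← lintegral_indicator_one (isCompact_symmetral hA x).measurableSet, symmetral_eq,
      inter_indicator_one]
    rfl
  have symmetral_le (x : V) : μ (symmetral A x) ≤ A.indicator (fun _ ↦ c) x := by
    by_cases hx : x ∈ A
    · simpa [hx] using hc x hx
    · simp [symmetral_eq_empty hAc hx]
  have key : μ A * μ A ≤ 2 ^ finrank ℝ V * c * μ A := by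
    have h_one : Measurable (A.indicator (1 : V → ℝ≥0∞)) := measurable_one.indicator hm
    calc μ A * μ A = 2 ^ finrank ℝ V * ∫⁻ x, μ (symmetral A x) ∂μ := by
          simp only [← lintegral_eq, two_pow_mul_lintegral_lintegral_add_mul_sub h_one h_one,
            lintegral_indicator_one hm]
      _ ≤ 2 ^ finrank ℝ V * ∫⁻ x, A.indicator (fun _ ↦ c) x ∂μ := by
          gcongr with x
          exact symmetral_le x
      _ = 2 ^ finrank ℝ V * c * μ A := by rw [lintegral_indicator_const hm, mul_assoc]
  rcases eq_or_ne (μ A) 0 with h0 | h0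
  · simp [h0]
  · exact (ENNReal.mul_le_mul_iff_left h0 hA.measure_ne_top).1 key

theorem ofReal_mul_measure_preimage_sub_le_lintegral {E : Type*} [NormedAddCommGroup E]
    [NormedSpace ℝ E] [FiniteDimensional ℝ E] [MeasurableSpace E] [BorelSpace E] {ρ : Measure E}
    [ρ.IsAddHaarMeasure] (ι : V →ₗ[ℝ] E) {A B : Set E} (hA : IsCompact A) (hB : IsCompact B)
    (hAc : Convex ℝ A) (hBc : Convex ℝ B) {ε : ℝ} (hε₀ : 0 ≤ ε) (hε₁ : ε ≤ 1) :
    ENNReal.ofReal (ε ^ finrank ℝ V) * μ (ι ⁻¹' (A - B))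
        * (ENNReal.ofReal ((1 - ε) ^ finrank ℝ E) * ρ (A ∩ B))
      ≤ ∫⁻ s, ρ (A ∩ (· - ι s) ⁻¹' B) ∂μ := by
  have hm : MeasurableSet (ι ⁻¹' (A - B)) :=
    (isCompact_sub hA hB).isClosed.measurableSet.preimage
      ι.continuous_of_finiteDimensional.measurable
  refine ofReal_pow_mul_measure_mul_le_lintegral hε₀ hm 0 ?_
  rintro b ⟨p, hp, q, hq, (hpq : p - q = ι b)⟩
  -- As `ι b = p - q`, the set `(1 - ε) • (A ∩ B) + ε • p` lies in `A ∩ (B + ι (ε • b))`.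
  refine ofReal_pow_mul_measure_le (sub_nonneg.2 hε₁) (ε • p) fun w hw ↦ ⟨?_, ?_⟩
  · exact hAc hw.1 hp (sub_nonneg.2 hε₁) hε₀ (by ring)
  · have hshift : (1 - ε) • w + ε • p - ι (ε • b + 0) = (1 - ε) • w + ε • q := by
      rw [add_zero, map_smul, ← hpq]
      module
    rw [mem_preimage, hshift]
    exact hBc hw.2 hq (sub_nonneg.2 hε₁) hε₀ (by ring)

theorem measure_sub_mul_measure_inter_le {A B : Set V} (hA : IsCompact A) (hB : IsCompact B)
    (hAc : Convex ℝ A) (hBc : Convex ℝ B) :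
    μ (A - B) * μ (A ∩ B) ≤ 4 ^ finrank ℝ V * (μ A * μ B) := by
  have key := ofReal_mul_measure_preimage_sub_le_lintegral (μ := μ) (ρ := μ) .id hA hB hAc hBc
    (ε := 2⁻¹) (by norm_num) (by norm_num)
  have half : ENNReal.ofReal ((2⁻¹ : ℝ) ^ finrank ℝ V) = (2 ^ finrank ℝ V)⁻¹ := by
    rw [inv_pow, ENNReal.ofReal_inv_of_pos (by positivity), ENNReal.ofReal_pow (by norm_num),
      ENNReal.ofReal_ofNat]
  rw [show (1 : ℝ) - 2⁻¹ = 2⁻¹ by norm_num, half] at key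
  simp only [LinearMap.id_coe, preimage_id, id_eq] at key
  rw [lintegral_measure_inter_preimage_sub hA.measurableSet hB.measurableSet, mul_assoc,
    ENNReal.inv_mul_le_iff (by simp) (by simp), mul_left_comm,
    ENNReal.inv_mul_le_iff (by simp) (by simp), ← mul_assoc, ← mul_pow] at key
  norm_num at key
  exact key

theorem measure_mul_measure_le_of_neg_eq {A B : Set V} (hA : IsCompact A) (hB : IsCompact B)
    (hAc : Convex ℝ A) (hBc : Convex ℝ B) (hAs : -A = A) (hBs : -B = B) :
    μ A * μ B ≤ μ (A - B) * μ (A ∩ B) := by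
  have hm (s : V) : MeasurableSet (A ∩ (· - s) ⁻¹' B) :=
    hA.measurableSet.inter (hB.measurableSet.preimage (by fun_prop))
  have measure_neg (s : V) : μ (A ∩ (· - -s) ⁻¹' B) = μ (A ∩ (· - s) ⁻¹' B) := by
    rw [← Measure.measure_neg μ (A ∩ (· - s) ⁻¹' B), inter_neg, hAs]
    congr 2
    ext x
    rw [mem_neg, mem_preimage, mem_preimage, show -x - s = -(x - -s) by abel, ← mem_neg, hBs]
  have le_inter (s : V) : μ (A ∩ (· - s) ⁻¹' B) ≤ μ (A ∩ B) := by
    have key := measure_mul_measure_le_sq (μ := μ) (hm s) (hm (-s))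
      (hA.measurableSet.inter hB.measurableSet) fun a ha b hb ↦
        ⟨hAc.midpoint_mem ha.1 hb.1, by
          simpa [midpoint_eq_smul_add] using hBc.midpoint_mem ha.2 hb.2⟩
    rw [measure_neg, ← sq] at key
    exact (ENNReal.pow_le_pow_left_iff two_ne_zero).1 key
  rw [← lintegral_measure_inter_preimage_sub hA.measurableSet hB.measurableSet, mul_comm,
    ← lintegral_indicator_const (isCompact_sub hA hB).measurableSet]
  refine lintegral_mono fun s ↦ ?_
  by_cases hs : s ∈ A - B
  · simpa [hs] using le_inter s
  · have : A ∩ (· - s) ⁻¹' B = ∅ := eq_empty_of_forall_notMem fun x ⟨hxA, hxB⟩ ↦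
      hs ⟨x, hxA, x - s, hxB, by simp⟩
    simp [this]

end Convolution

section Constants

theorem inv_two_pow_le_one_sub_div_pow {k n : ℕ} (hn : 0 < n) (hkn : k ≤ n) :
    ((2 : ℝ) ^ k)⁻¹ ≤ (1 - (k : ℝ) / (2 * n)) ^ n := by
  have hn' : (0 : ℝ) < n := by exact_mod_cast hn
  have bernoulli := rpow_one_add_le_one_add_mul_self (s := -(1 / 2)) (by norm_num)
    (p := (k : ℝ) / n) (by positivity) (by rw [div_le_one hn']; exact_mod_cast hkn)
  calc ((2 : ℝ) ^ k)⁻¹ = ((1 + -(1 / 2) : ℝ) ^ ((k : ℝ) / n)) ^ n := by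
        rw [← Real.rpow_natCast (_ ^ _) n, ← Real.rpow_mul (by norm_num), div_mul_cancel₀ _ hn'.ne',
          Real.rpow_natCast, ← inv_pow]
        norm_num
    _ ≤ (1 + (k : ℝ) / n * -(1 / 2)) ^ n := by gcongr
    _ = (1 - (k : ℝ) / (2 * n)) ^ n := by
        congr 1
        field_simp
        ring

theorem div_two_mul_le_one {k n : ℕ} (hkn : k ≤ n) : (k : ℝ) / (2 * n) ≤ 1 := by
  refine div_le_one_of_le₀ ?_ (by positivity)
  have : (k : ℝ) ≤ n := by exact_mod_cast hkn
  linarith [n.cast_nonneg (α := ℝ)]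

theorem le_ofReal_pow_mul_of_mul_le {k n : ℕ} (hk : 0 < k) (hkn : k ≤ n) {b f : ℝ≥0∞}
    (h : ENNReal.ofReal (((k : ℝ) / (2 * n)) ^ k * (1 - (k : ℝ) / (2 * n)) ^ n) * b
      ≤ 4 ^ k * (2 * (4 ^ k * f))) :
    b ≤ ENNReal.ofReal (128 * n / k) ^ k * f := by
  have hn : 0 < n := hk.trans_le hkn
  have lower : ENNReal.ofReal (k / (4 * n)) ^ k
      ≤ ENNReal.ofReal (((k : ℝ) / (2 * n)) ^ k * (1 - (k : ℝ) / (2 * n)) ^ n) := by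
    rw [← ENNReal.ofReal_pow (by positivity)]
    refine ENNReal.ofReal_le_ofReal ?_
    calc ((k : ℝ) / (4 * n)) ^ k = ((k : ℝ) / (2 * n)) ^ k * ((2 : ℝ) ^ k)⁻¹ := by
          rw [← inv_pow, ← mul_pow]
          congr 1
          field_simp
          ring
      _ ≤ _ := by
          gcongr
          exact inv_two_pow_le_one_sub_div_pow hn hkn
  calc b = ENNReal.ofReal (4 * n / k) ^ k * (ENNReal.ofReal (k / (4 * n)) ^ k * b) := by
        rw [← mul_assoc, ← mul_pow, ← ENNReal.ofReal_mul (by positivity),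
          show (4 * n / k : ℝ) * (k / (4 * n)) = 1 by field_simp, ENNReal.ofReal_one, one_pow,
          one_mul]
    _ ≤ ENNReal.ofReal (4 * n / k) ^ k * (4 ^ k * (2 ^ k * (4 ^ k * f))) := by
        gcongr ENNReal.ofReal (4 * n / k) ^ k * ?_
        refine (mul_le_mul_left lower b).trans (h.trans ?_)
        gcongr
        exact le_self_pow one_le_two hk.ne'
    _ = ENNReal.ofReal (128 * n / k) ^ k * f := by
        rw [show (128 * n / k : ℝ) = 4 * n / k * 32 by ring, ENNReal.ofReal_mul (by positivity),
          mul_pow, ENNReal.ofReal_ofNat, show (32 : ℝ≥0∞) = 4 * 2 * 4 by norm_num, mul_pow,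
          mul_pow]
        ring

end Constants

section Fibers

theorem isCompact_preimage_prodMk_left {X Y : Type*} [TopologicalSpace X] [TopologicalSpace Y]
    [T2Space X] [T2Space Y] {K : Set (X × Y)} (hK : IsCompact K) (y : Y) :
    IsCompact ((·, y) ⁻¹' K) :=
  (hK.image continuous_fst).of_isClosed_subset (hK.isClosed.preimage (by fun_prop))
    fun _ hx ↦ ⟨_, hx, rfl⟩

theorem convex_preimage_prodMk_left {V W : Type*} [AddCommGroup V] [Module ℝ V] [AddCommGroup W]
    [Module ℝ W] {K : Set (V × W)} (hK : Convex ℝ K) (y : W) : Convex ℝ ((·, y) ⁻¹' K) := by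
  intro a ha b hb s t hs ht hst
  simpa [← add_smul, hst] using hK ha hb hs ht hst

theorem prod_measure_le_mul_measure {X Y : Type*} [MeasurableSpace X] [MeasurableSpace Y]
    {μ : Measure X} {ν : Measure Y} [SFinite μ] [SFinite ν] {L : Set (X × Y)} {T : Set Y}
    (hL : MeasurableSet L) (hT : MeasurableSet T) (hLT : MapsTo Prod.snd L T) {c : ℝ≥0∞}
    (h : ∀ y, μ ((·, y) ⁻¹' L) ≤ c) : μ.prod ν L ≤ c * ν T := by
  rw [Measure.prod_apply_symm hL, ← lintegral_indicator_const hT]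
  refine lintegral_mono fun y ↦ ?_
  by_cases hy : y ∈ T
  · simpa [hy] using h y
  · have : (·, y) ⁻¹' L = ∅ := eq_empty_of_forall_notMem fun x hx ↦ hy (hLT hx)
    simp [this]

theorem prod_measure_le_rpow_half_mul_lintegral {X Y : Type*} [MeasurableSpace X]
    [MeasurableSpace Y] {μ : Measure X} {ν : Measure Y} [SFinite ν] {K : Set (X × Y)}
    (hK : MeasurableSet K) {M : ℝ≥0∞}
    (hM : ∀ x, ν (Prod.mk x ⁻¹' K) ≤ M) :
    μ.prod ν K ≤ M ^ (2⁻¹ : ℝ) * ∫⁻ x, ν (Prod.mk x ⁻¹' K) ^ (2⁻¹ : ℝ) ∂μ := by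
  have hfib : Measurable fun x ↦ ν (Prod.mk x ⁻¹' K) := measurable_measure_prodMk_left hK
  rw [Measure.prod_apply hK, ← lintegral_const_mul _ (hfib.pow_const _)]
  refine lintegral_mono fun x ↦ ?_
  calc ν (Prod.mk x ⁻¹' K)
      = ν (Prod.mk x ⁻¹' K) ^ (2⁻¹ : ℝ) * ν (Prod.mk x ⁻¹' K) ^ (2⁻¹ : ℝ) := by
        rw [← ENNReal.rpow_add_of_nonneg _ _ (by norm_num) (by norm_num)]
        norm_num
    _ ≤ M ^ (2⁻¹ : ℝ) * ν (Prod.mk x ⁻¹' K) ^ (2⁻¹ : ℝ) :=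
        mul_le_mul_left (ENNReal.rpow_le_rpow (hM x) (by norm_num)) _

theorem measure_fiber_le_two_pow_mul {V W : Type*} [NormedAddCommGroup V] [NormedSpace ℝ V]
    [FiniteDimensional ℝ V] [MeasurableSpace V] [BorelSpace V] [AddCommGroup W] [Module ℝ W]
    {μ : Measure V} [μ.IsAddHaarMeasure] {K : Set (V × W)} (hKc : Convex ℝ K) {y₀ y₁ : W}
    (hy₀ : y₀ ∈ Prod.snd '' K) :
    μ ((·, y₁) ⁻¹' K) ≤ 2 ^ finrank ℝ V * μ ((·, midpoint ℝ y₀ y₁) ⁻¹' K) := by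
  obtain ⟨⟨x₀, _⟩, hx₀, rfl⟩ := hy₀
  exact measure_le_two_pow_mul x₀ fun x hx ↦ hKc.midpoint_mem hx₀ hx

end Fibers

/-! ### Central sections of a body with barycenter zero -/

section Product

variable {V W : Type*} [NormedAddCommGroup V] [NormedSpace ℝ V] [FiniteDimensional ℝ V]
  [MeasurableSpace V] [BorelSpace V] [NormedAddCommGroup W] [NormedSpace ℝ W]
  [FiniteDimensional ℝ W] [MeasurableSpace W] [BorelSpace W]
  {μ : Measure V} [μ.IsAddHaarMeasure] {ν : Measure W} [ν.IsAddHaarMeasure] {K : Set (V × W)}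

theorem prod_measure_le_mul_measure_section [Nontrivial V] (hK : IsCompact K) (hKc : Convex ℝ K)
    (h0 : 0 ∈ interior K) (hbar : ∫ x in K, x ∂μ.prod ν = 0) :
    μ.prod ν K ≤ 2 * (4 ^ finrank ℝ V * μ (LinearMap.inl ℝ V W ⁻¹' (K ∩ -K)))
      * ν (Prod.snd '' K) := by
  have section_ne_zero : μ (LinearMap.inl ℝ V W ⁻¹' symmetral K 0) ≠ 0 := by
    rw [symmetral_zero]
    exact (Measure.measure_pos_of_mem_nhds μ (x := 0) <|
      (Continuous.prodMk_left (0 : W)).continuousAt.preimage_mem_nhds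
        (inter_neg_mem_nhds_zero h0)).ne'
  obtain ⟨L, hLK, hL, hLc, hKL, hle⟩ :=
    ((setConcaveOn_symmetral hKc).preimage (.inl ℝ V W)).exists_subset_forall_measure_le (μ := μ)
      (fun p _ ↦ isCompact_preimage_prodMk_left (isCompact_symmetral hK p) 0)
      (fun p hp ↦ ⟨0, by rw [mem_preimage, map_zero]; exact zero_mem_symmetral hp⟩)
      section_ne_zero hK h0 hbar
  rw [symmetral_zero] at hle
  have fiber_le (y : W) :
      μ ((·, y) ⁻¹' L) ≤ 4 ^ finrank ℝ V * μ (LinearMap.inl ℝ V W ⁻¹' (K ∩ -K)) := by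
    rw [show (4 : ℝ≥0∞) = 2 * 2 by norm_num, mul_pow, mul_assoc]
    refine measure_le_two_pow_mul_of_measure_symmetral_le (isCompact_preimage_prodMk_left hL y)
      (convex_preimage_prodMk_left hLc y) fun x hx ↦ (measure_mono ?_).trans (hle (x, y) hx)
    exact fun u hu ↦ ⟨by simpa using hLK hu.1, by simpa using hLK hu.2⟩
  refine hKL.trans ?_
  rw [mul_assoc]
  gcongr
  exact prod_measure_le_mul_measure hL.measurableSet (hK.image continuous_snd).measurableSet
    (fun p hp ↦ mem_image_of_mem _ (hLK hp)) fiber_le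

theorem measure_image_snd_mul_lintegral_sq_le (hK : IsCompact K) (hKc : Convex ℝ K) :
    ν (Prod.snd '' K) * ∫⁻ y, μ ((·, y) ⁻¹' K) ^ 2 ∂ν ≤ 4 ^ finrank ℝ V * μ.prod ν K ^ 2 := by
  have hY := (hK.image continuous_snd).measurableSet
  have hfib : Measurable fun y ↦ μ ((·, y) ⁻¹' K) :=
    measurable_measure_prodMk_right hK.measurableSet
  have h_half : (1 : ℝ) - 2⁻¹ = 2⁻¹ := by norm_num
  have rpow_half_sq (a : ℝ≥0∞) : (a ^ (2⁻¹ : ℝ)) ^ 2 = a := by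
    rw [← ENNReal.rpow_natCast, ← ENNReal.rpow_mul]
    norm_num
  have key := satisfiesPrekopaLeindler_of_isAddHaarMeasure ν (t := 2⁻¹) (by norm_num) (by norm_num)
    (measurable_one.indicator hY) (hfib.pow_const 2) (hfib.const_mul (2 ^ finrank ℝ V))
    fun y₀ y₁ ↦ ?_
  · rw [lintegral_indicator_one hY, lintegral_const_mul _ hfib,
      ← Measure.prod_apply_symm hK.measurableSet, h_half] at key
    have := pow_le_pow_left' key 2
    rw [mul_pow, rpow_half_sq, rpow_half_sq, mul_pow, ← pow_mul, mul_comm (finrank ℝ V),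
      pow_mul] at this
    norm_num at this
    exact this
  · by_cases hy₀ : y₀ ∈ Prod.snd '' K
    · have hmid : (2⁻¹ : ℝ) • y₀ + (2⁻¹ : ℝ) • y₁ = midpoint ℝ y₀ y₁ := by
        simp [midpoint_eq_smul_add]
      rw [indicator_of_mem hy₀, Pi.one_apply, ENNReal.one_rpow, one_mul, h_half, hmid,
        ← ENNReal.rpow_natCast, ← ENNReal.rpow_mul]
      simpa using measure_fiber_le_two_pow_mul hKc hy₀
    · simp [hy₀, h_half]

theorem lintegral_prod_measure_inter_preimage_sub (hK : MeasurableSet K) :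
    ∫⁻ s, μ.prod ν (K ∩ (· - LinearMap.inl ℝ V W s) ⁻¹' K) ∂μ
      = ∫⁻ y, μ ((·, y) ⁻¹' K) ^ 2 ∂ν := by
  have hinter : MeasurableSet {z : (V × W) × V | (z.2, z.1.2) ∈ K ∧ (z.2 - z.1.1, z.1.2) ∈ K} :=
    (hK.preimage (by fun_prop)).inter (hK.preimage (by fun_prop))
  have hmeas := measurable_measure_prodMk_left (ν := μ) hinter
  have prod_eq (s : V) : μ.prod ν (K ∩ (· - LinearMap.inl ℝ V W s) ⁻¹' K)
      = ∫⁻ y, μ ((·, y) ⁻¹' K ∩ (· - s) ⁻¹' ((·, y) ⁻¹' K)) ∂ν := by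
    rw [Measure.prod_apply_symm (hK.inter (hK.preimage (by fun_prop)))]
    simp [preimage_preimage]
  simp only [prod_eq]
  rw [lintegral_lintegral_swap hmeas.aemeasurable]
  refine lintegral_congr fun y ↦ ?_
  have hfib : MeasurableSet ((·, y) ⁻¹' K) := hK.preimage (by fun_prop)
  rw [lintegral_measure_inter_preimage_sub hfib hfib, sq]

theorem measure_section_sub_le [Nontrivial V] (hK : IsCompact K) (hKc : Convex ℝ K)
    (h0 : 0 ∈ interior K) (hbar : ∫ x in K, x ∂μ.prod ν = 0) :
    μ (LinearMap.inl ℝ V W ⁻¹' (K - K))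
      ≤ ENNReal.ofReal (128 * finrank ℝ (V × W) / finrank ℝ V) ^ finrank ℝ V
        * μ (LinearMap.inl ℝ V W ⁻¹' (K ∩ -K)) := by
  have hkn : finrank ℝ V ≤ finrank ℝ (V × W) := by simp
  refine le_ofReal_pow_mul_of_mul_le finrank_pos hkn ?_
  set k := finrank ℝ V
  set n := finrank ℝ (V × W)
  have hε₁ : (k : ℝ) / (2 * n) ≤ 1 := div_two_mul_le_one hkn
  set ε := (k : ℝ) / (2 * n)
  have shadow := prod_measure_le_mul_measure_section hK hKc h0 hbar
  have energy_le := measure_image_snd_mul_lintegral_sq_le (μ := μ) (ν := ν) hK hKc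
  have energy_ge := ofReal_mul_measure_preimage_sub_le_lintegral (μ := μ) (ρ := μ.prod ν)
    (LinearMap.inl ℝ V W) hK hK hKc hKc (ε := ε) (by positivity) hε₁
  rw [inter_self, lintegral_prod_measure_inter_preimage_sub hK.measurableSet] at energy_ge
  have hK₀ : μ.prod ν K ≠ 0 :=
    (Measure.measure_pos_of_mem_nhds _ (mem_interior_iff_mem_nhds.1 h0)).ne'
  have hY₀ : ν (Prod.snd '' K) ≠ 0 := by
    intro h
    rw [h, mul_zero] at shadow
    exact hK₀ (nonpos_iff_eq_zero.1 shadow)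
  rw [ENNReal.ofReal_mul (by positivity)]
  refine (ENNReal.mul_le_mul_iff_left (mul_ne_zero hY₀ hK₀)
    (ENNReal.mul_ne_top (hK.image continuous_snd).measure_ne_top hK.measure_ne_top)).1 ?_
  calc _ = ν (Prod.snd '' K) * (ENNReal.ofReal (ε ^ k) * μ (LinearMap.inl ℝ V W ⁻¹' (K - K))
        * (ENNReal.ofReal ((1 - ε) ^ n) * μ.prod ν K)) := by ring
    _ ≤ 4 ^ k * (μ.prod ν K * μ.prod ν K) := by
        rw [← sq]
        exact (mul_le_mul_right energy_ge _).trans energy_le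
    _ ≤ 4 ^ k * (2 * (4 ^ k * μ (LinearMap.inl ℝ V W ⁻¹' (K ∩ -K))) * ν (Prod.snd '' K)
        * μ.prod ν K) := by gcongr
    _ = _ := by ring

end Product

/-! ### Projections of a body with barycenter zero -/

section Projections

variable {V W : Type*} [NormedAddCommGroup V] [NormedSpace ℝ V] [NormedAddCommGroup W]
  [NormedSpace ℝ W] {K : Set (V × W)}

/-- The pairs `(x, p)` such that `x` is the first component of half of a chord of `K` with
midpoint `p`. Its fibers over `p` are projections of symmetrals, and its fibers over `x` contain
the midpoints of fibers of `K`, so that its measure can be estimated in both ways. -/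
def fstHalfChords (K : Set (V × W)) : Set (V × (V × W)) :=
  {z | z.1 ∈ Prod.fst '' symmetral K z.2}

theorem isCompact_fstHalfChords (hK : IsCompact K) : IsCompact (fstHalfChords K) := by
  have hcont : Continuous fun q : (V × W) × (V × W) ↦
      ((2⁻¹ : ℝ) • (q.1.1 - q.2.1), (2⁻¹ : ℝ) • (q.1 + q.2)) := by fun_prop
  convert (hK.prod hK).image hcont using 1
  ext ⟨x, p⟩
  constructor
  · rintro ⟨q, hq, rfl⟩
    refine ⟨(p + q, p - q), hq, ?_⟩
    ext <;> simp <;> module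
  · rintro ⟨⟨q, r⟩, ⟨hq, hr⟩, h⟩
    obtain ⟨rfl, rfl⟩ := Prod.mk.inj h
    refine ⟨(2⁻¹ : ℝ) • (q - r), ⟨?_, ?_⟩, rfl⟩
    · convert hq using 1
      module
    · convert hr using 1
      module

variable [FiniteDimensional ℝ V] [MeasurableSpace V] [BorelSpace V] [FiniteDimensional ℝ W]
  [MeasurableSpace W] [BorelSpace W] {μ : Measure V} [μ.IsAddHaarMeasure] {ν : Measure W}
  [ν.IsAddHaarMeasure]

theorem prod_measure_fstHalfChords_le (hK : IsCompact K) (hKc : Convex ℝ K) {c : ℝ≥0∞}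
    (hc : ∀ p ∈ K, μ (Prod.fst '' symmetral K p) ≤ c) :
    μ.prod (μ.prod ν) (fstHalfChords K) ≤ c * μ.prod ν K := by
  refine prod_measure_le_mul_measure (isCompact_fstHalfChords hK).measurableSet hK.measurableSet
    ?_ fun p ↦ ?_
  · rintro ⟨_, p⟩ ⟨q, hq, -⟩
    by_contra hp
    rwa [symmetral_eq_empty hKc hp] at hq
  · by_cases hp : p ∈ K
    · exact hc p hp
    · simp [fstHalfChords, symmetral_eq_empty hKc hp]

theorem lintegral_lintegral_rpow_half_le_prod_measure_fstHalfChords (hK : IsCompact K) :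
    ∫⁻ x, ∫⁻ u, ν (Prod.mk (x + u) ⁻¹' K) ^ (2⁻¹ : ℝ) * ν (Prod.mk (x - u) ⁻¹' K) ^ (2⁻¹ : ℝ) ∂μ ∂μ
      ≤ μ.prod (μ.prod ν) (fstHalfChords K) := by
  have hfib : Measurable fun x ↦ ν (Prod.mk x ⁻¹' K) ^ (2⁻¹ : ℝ) :=
    (measurable_measure_prodMk_left hK.measurableSet).pow_const _
  have hprod : Measurable (Function.uncurry fun x u ↦
      ν (Prod.mk (x + u) ⁻¹' K) ^ (2⁻¹ : ℝ) * ν (Prod.mk (x - u) ⁻¹' K) ^ (2⁻¹ : ℝ)) :=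
    (hfib.comp (measurable_fst.add measurable_snd)).mul
      (hfib.comp (measurable_fst.sub measurable_snd))
  have hR := (isCompact_fstHalfChords hK).measurableSet
  rw [lintegral_lintegral_swap hprod.aemeasurable, Measure.prod_apply hR]
  refine lintegral_mono fun u ↦ ?_
  have hRu : MeasurableSet (Prod.mk u ⁻¹' fstHalfChords K) := hR.preimage (by fun_prop)
  rw [Measure.prod_apply hRu]
  refine lintegral_mono fun x ↦ ?_
  refine measure_rpow_half_mul_measure_rpow_half_le (hK.measurableSet.preimage (by fun_prop))
    (hK.measurableSet.preimage (by fun_prop)) (hRu.preimage (by fun_prop)) fun a ha b hb ↦ ?_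
  refine ⟨(u, (2⁻¹ : ℝ) • (a - b)), ⟨?_, ?_⟩, rfl⟩
  · have : midpoint ℝ a b + (2⁻¹ : ℝ) • (a - b) = a := by
      rw [midpoint_eq_smul_add, invOf_eq_inv]
      module
    simpa [this] using ha
  · have : midpoint ℝ a b - (2⁻¹ : ℝ) • (a - b) = b := by
      rw [midpoint_eq_smul_add, invOf_eq_inv]
      module
    simpa [this] using hb

theorem prod_measure_le_of_measure_image_fst_symmetral_le (hK : IsCompact K) (hKc : Convex ℝ K)
    {M c : ℝ≥0∞} (hM : ∀ x, ν (Prod.mk x ⁻¹' K) ≤ M)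
    (hc : ∀ p ∈ K, μ (Prod.fst '' symmetral K p) ≤ c) :
    μ.prod ν K ≤ 2 ^ finrank ℝ V * (c * M) := by
  obtain hzero | hpos := eq_or_ne (μ.prod ν K) 0
  · simp [hzero]
  have hfib : Measurable fun x ↦ ν (Prod.mk x ⁻¹' K) ^ (2⁻¹ : ℝ) :=
    (measurable_measure_prodMk_left hK.measurableSet).pow_const _
  set I := ∫⁻ x, ν (Prod.mk x ⁻¹' K) ^ (2⁻¹ : ℝ) ∂μ
  have hI : μ.prod ν K ≤ M ^ (2⁻¹ : ℝ) * I :=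
    prod_measure_le_rpow_half_mul_lintegral hK.measurableSet hM
  refine (ENNReal.mul_le_mul_iff_left hpos hK.measure_ne_top).1 ?_
  calc μ.prod ν K * μ.prod ν K ≤ (M ^ (2⁻¹ : ℝ) * I) * (M ^ (2⁻¹ : ℝ) * I) := by gcongr
    _ = (M ^ (2⁻¹ : ℝ) * M ^ (2⁻¹ : ℝ)) * (I * I) := by ring
    _ = M * (I * I) := by
        rw [← ENNReal.rpow_add_of_nonneg _ _ (by norm_num) (by norm_num)]
        norm_num
    _ ≤ M * (2 ^ finrank ℝ V * (c * μ.prod ν K)) := by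
        rw [← two_pow_mul_lintegral_lintegral_add_mul_sub hfib hfib]
        gcongr
        exact (lintegral_lintegral_rpow_half_le_prod_measure_fstHalfChords hK).trans
          (prod_measure_fstHalfChords_le hK hKc hc)
    _ = 2 ^ finrank ℝ V * (c * M) * μ.prod ν K := by ring

theorem prod_measure_le_mul_measure_image_fst [Nontrivial V] (hK : IsCompact K)
    (hKc : Convex ℝ K) (h0 : 0 ∈ interior K) (hbar : ∫ x in K, x ∂μ.prod ν = 0) {M : ℝ≥0∞}
    (hM : ∀ x, ν (Prod.mk x ⁻¹' K) ≤ M) :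
    μ.prod ν K ≤ 2 * (4 ^ finrank ℝ V * μ (Prod.fst '' (K ∩ -K))) * M := by
  have image_ne_zero : μ (Prod.fst '' symmetral K 0) ≠ 0 := by
    rw [symmetral_zero]
    exact (Measure.measure_pos_of_mem_nhds μ <|
      isOpenMap_fst.image_mem_nhds (inter_neg_mem_nhds_zero h0)).ne'
  obtain ⟨L, hLK, hL, hLc, hKL, hle⟩ :=
    ((setConcaveOn_symmetral hKc).image (.fst ℝ V W)).exists_subset_forall_measure_le (μ := μ)
      (fun p _ ↦ (isCompact_symmetral hK p).image continuous_fst)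
      (fun p hp ↦ ⟨0, 0, zero_mem_symmetral hp, rfl⟩) image_ne_zero hK h0 hbar
  rw [symmetral_zero] at hle
  calc μ.prod ν K ≤ 2 * μ.prod ν L := hKL
    _ ≤ 2 * (2 ^ finrank ℝ V * (2 ^ finrank ℝ V * μ (Prod.fst '' (K ∩ -K)) * M)) := by
        gcongr
        exact prod_measure_le_of_measure_image_fst_symmetral_le hL hLc
          (fun x ↦ (measure_mono (preimage_mono hLK)).trans (hM x))
          fun p hp ↦ (measure_mono (image_mono (symmetral_mono hLK p))).trans (hle p hp)
    _ = 2 * (4 ^ finrank ℝ V * μ (Prod.fst '' (K ∩ -K))) * M := by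
        rw [show (4 : ℝ≥0∞) = 2 * 2 by norm_num, mul_pow]
        ring

theorem ofReal_mul_measure_image_fst_mul_le (hK : IsCompact K) (hKc : Convex ℝ K) {ε : ℝ}
    (hε₀ : 0 ≤ ε) (hε₁ : ε ≤ 1) (x₀ : V) :
    ENNReal.ofReal (ε ^ finrank ℝ V) * μ (Prod.fst '' K)
      * (ENNReal.ofReal ((1 - ε) ^ finrank ℝ W) * ν (Prod.mk x₀ ⁻¹' K)) ≤ μ.prod ν K := by
  rw [Measure.prod_apply hK.measurableSet]
  refine ofReal_pow_mul_measure_mul_le_lintegral hε₀ (hK.image continuous_fst).measurableSet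
    ((1 - ε) • x₀) ?_
  rintro _ ⟨⟨x, y⟩, hxy, rfl⟩
  refine ofReal_pow_mul_measure_le (sub_nonneg.2 hε₁) (ε • y) fun z hz ↦ ?_
  simpa [add_comm] using hKc hz hxy (sub_nonneg.2 hε₁) hε₀ (by ring)

theorem measure_sub_self_le {A : Set V} (hA : IsCompact A) (hAc : Convex ℝ A) (hA₀ : μ A ≠ 0) :
    μ (A - A) ≤ 4 ^ finrank ℝ V * μ A := by
  have := measure_sub_mul_measure_inter_le (μ := μ) hA hA hAc hAc
  rw [inter_self, ← mul_assoc] at this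
  exact (ENNReal.mul_le_mul_iff_left hA₀ hA.measure_ne_top).1 this

theorem ofReal_mul_measure_image_fst_le [Nontrivial V] (hK : IsCompact K) (hKc : Convex ℝ K)
    (h0 : 0 ∈ interior K) (hbar : ∫ x in K, x ∂μ.prod ν = 0) {ε : ℝ} (hε₀ : 0 ≤ ε) (hε₁ : ε ≤ 1) :
    ENNReal.ofReal (ε ^ finrank ℝ V * (1 - ε) ^ finrank ℝ W) * μ (Prod.fst '' K)
      ≤ 2 * (4 ^ finrank ℝ V * μ (Prod.fst '' (K ∩ -K))) := by
  set M := ⨆ x, ν (Prod.mk x ⁻¹' K)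
  have hKM : μ.prod ν K ≤ 2 * (4 ^ finrank ℝ V * μ (Prod.fst '' (K ∩ -K))) * M :=
    prod_measure_le_mul_measure_image_fst hK hKc h0 hbar (le_iSup _)
  have hM₀ : M ≠ 0 := by
    intro h
    rw [h, mul_zero, nonpos_iff_eq_zero] at hKM
    exact (Measure.measure_pos_of_mem_nhds _ (mem_interior_iff_mem_nhds.1 h0)).ne' hKM
  have hM : M ≠ ⊤ := by
    refine ((iSup_le fun x ↦ measure_mono fun y hy ↦ ?_).trans_lt
      ((hK.image continuous_snd).measure_lt_top (μ := ν))).ne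
    exact mem_image_of_mem Prod.snd hy
  refine (ENNReal.mul_le_mul_iff_left hM₀ hM).1 (le_trans ?_ hKM)
  rw [ENNReal.mul_iSup]
  refine iSup_le fun x ↦ le_trans (le_of_eq ?_)
    (ofReal_mul_measure_image_fst_mul_le hK hKc hε₀ hε₁ x)
  rw [ENNReal.ofReal_mul (by positivity)]
  ring

theorem measure_image_fst_sub_le [Nontrivial V] (hK : IsCompact K) (hKc : Convex ℝ K)
    (h0 : 0 ∈ interior K) (hbar : ∫ x in K, x ∂μ.prod ν = 0) :
    μ (Prod.fst '' K - Prod.fst '' K)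
      ≤ ENNReal.ofReal (128 * finrank ℝ (V × W) / finrank ℝ V) ^ finrank ℝ V
        * μ (Prod.fst '' (K ∩ -K)) := by
  have hkn : finrank ℝ V ≤ finrank ℝ (V × W) := by simp
  refine le_ofReal_pow_mul_of_mul_le finrank_pos hkn ?_
  have hε₁ := div_two_mul_le_one hkn
  have hε₀ : 0 ≤ (finrank ℝ V / (2 * finrank ℝ (V × W)) : ℝ) := by positivity
  set k := finrank ℝ V
  set n := finrank ℝ (V × W)
  set ε := (k : ℝ) / (2 * n)
  set P := Prod.fst '' K
  have hP₀ : μ P ≠ 0 := (Measure.measure_pos_of_mem_nhds μ <|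
    isOpenMap_fst.image_mem_nhds (mem_interior_iff_mem_nhds.1 h0)).ne'
  have hPP : μ (P - P) ≤ 4 ^ k * μ P :=
    measure_sub_self_le (hK.image continuous_fst) (hKc.linear_image (.fst ℝ V W)) hP₀
  have hpow : (1 - ε) ^ n ≤ (1 - ε) ^ finrank ℝ W :=
    pow_le_pow_of_le_one (sub_nonneg.2 hε₁) (sub_le_self _ hε₀) (by simp [n])
  calc ENNReal.ofReal (ε ^ k * (1 - ε) ^ n) * μ (P - P)
      ≤ ENNReal.ofReal (ε ^ k * (1 - ε) ^ finrank ℝ W) * (4 ^ k * μ P) := by gcongr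
    _ = 4 ^ k * (ENNReal.ofReal (ε ^ k * (1 - ε) ^ finrank ℝ W) * μ P) := by ring
    _ ≤ 4 ^ k * (2 * (4 ^ k * μ (Prod.fst '' (K ∩ -K)))) := by
        gcongr 4 ^ k * ?_
        exact ofReal_mul_measure_image_fst_le hK hKc h0 hbar hε₀ hε₁

end Projections

/-! ### Polarity -/

section Polar

variable {E F : Type*} [NormedAddCommGroup E] [InnerProductSpace ℝ E] [NormedAddCommGroup F]
  [InnerProductSpace ℝ F] {S T : Set E} {r : ℝ}

/-- The polar of a subset of a real inner product space, identified with its dual. The defining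
inequality is one-sided, in contrast to `LinearMap.polar`; on Euclidean space this is
definitionally `polarBody`. -/
def innerPolar (T : Set E) : Set E :=
  {x | ∀ y ∈ T, ⟪x, y⟫ ≤ 1}

theorem innerPolar_eq_iInter (T : Set E) : innerPolar T = ⋂ y ∈ T, {x | ⟪x, y⟫ ≤ 1} := by
  ext x
  simp [innerPolar]

theorem isClosed_innerPolar (T : Set E) : IsClosed (innerPolar T) := by
  rw [innerPolar_eq_iInter]
  exact isClosed_biInter fun y _ ↦ isClosed_le (by fun_prop) (by fun_prop)

theorem convex_innerPolar (T : Set E) : Convex ℝ (innerPolar T) := by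
  rw [innerPolar_eq_iInter]
  refine convex_iInter₂ fun y _ ↦ convex_halfSpace_le ⟨fun _ _ ↦ ?_, fun _ _ ↦ ?_⟩ 1
  · exact inner_add_left ..
  · exact real_inner_smul_left ..

theorem zero_mem_innerPolar (T : Set E) : 0 ∈ innerPolar T :=
  fun y _ ↦ by simp

theorem innerPolar_antitone : Antitone (innerPolar : Set E → Set E) :=
  fun _ _ h _ hx y hy ↦ hx y (h hy)

theorem innerPolar_neg (T : Set E) : innerPolar (-T) = -innerPolar T := by
  ext x
  simp only [innerPolar, mem_ofPred_eq, mem_neg, inner_neg_left]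
  exact ⟨fun h y hy ↦ by simpa using h (-y) (by simpa using hy),
    fun h y hy ↦ by simpa using h (-y) hy⟩

theorem subset_innerPolar_innerPolar (T : Set E) : T ⊆ innerPolar (innerPolar T) := by
  intro x hx y hy
  rw [real_inner_comm]
  exact hy x hx

theorem closedBall_subset_innerPolar (hr : 0 < r) (h : T ⊆ closedBall 0 r) :
    closedBall 0 r⁻¹ ⊆ innerPolar T := by
  intro x hx y hy
  have hy' := h hy
  rw [mem_closedBall_zero_iff] at hx hy'
  calc ⟪x, y⟫ ≤ ‖x‖ * ‖y‖ := real_inner_le_norm x y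
    _ ≤ r⁻¹ * r := by gcongr
    _ = 1 := inv_mul_cancel₀ hr.ne'

theorem innerPolar_subset_closedBall (hr : 0 < r) (h : closedBall 0 r ⊆ T) :
    innerPolar T ⊆ closedBall 0 r⁻¹ := by
  intro x hx
  rw [mem_closedBall_zero_iff]
  obtain rfl | hx₀ := eq_or_ne x 0
  · simp [hr.le]
  have hnorm : 0 < ‖x‖ := norm_pos_iff.2 hx₀
  have hmem : (r / ‖x‖) • x ∈ closedBall 0 r := by
    rw [mem_closedBall_zero_iff, norm_smul, Real.norm_of_nonneg (by positivity),
      div_mul_cancel₀ _ hnorm.ne']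
  have := hx _ (h hmem)
  rw [real_inner_smul_right, real_inner_self_eq_norm_sq,
    show r / ‖x‖ * ‖x‖ ^ 2 = r * ‖x‖ by field_simp] at this
  rwa [← one_div, le_div_iff₀' hr]

theorem innerPolar_mem_nhds_zero (h : Bornology.IsBounded T) : innerPolar T ∈ nhds 0 := by
  obtain ⟨R, hR, hT⟩ := h.subset_closedBall_lt 0 0
  exact Filter.mem_of_superset (closedBall_mem_nhds 0 (inv_pos.2 hR))
    (closedBall_subset_innerPolar hR hT)

theorem isCompact_innerPolar [FiniteDimensional ℝ E] (h : T ∈ nhds 0) :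
    IsCompact (innerPolar T) := by
  obtain ⟨r, hr, hT⟩ := nhds_basis_closedBall.mem_iff.1 h
  exact (isCompact_closedBall 0 r⁻¹).of_isClosed_subset (isClosed_innerPolar T)
    (innerPolar_subset_closedBall hr hT)

theorem innerPolar_innerPolar [CompleteSpace E] (hT : IsClosed T) (hTc : Convex ℝ T)
    (h0 : 0 ∈ T) : innerPolar (innerPolar T) = T := by
  refine (subset_innerPolar_innerPolar T).antisymm' fun x hx ↦ ?_
  by_contra hxT
  obtain ⟨f, u, hu, hux⟩ := geometric_hahn_banach_closed_point hTc hT hxT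
  have hu₀ : 0 < u := by simpa using hu 0 h0
  set y := (InnerProductSpace.toDual ℝ E).symm f
  have hy (z : E) : ⟪y, z⟫ = f z := InnerProductSpace.toDual_symm_apply
  have hmem : u⁻¹ • y ∈ innerPolar T := by
    intro z hz
    rw [real_inner_smul_left, hy, inv_mul_le_iff₀ hu₀, mul_one]
    exact (hu z hz).le
  have := hx _ hmem
  rw [real_inner_comm, real_inner_smul_left, hy, inv_mul_le_iff₀ hu₀, mul_one] at this
  exact this.not_gt hux

theorem innerPolar_image [CompleteSpace E] [CompleteSpace F] (f : E →L[ℝ] F) (T : Set E) :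
    innerPolar (f '' T) = f.adjoint ⁻¹' innerPolar T := by
  ext x
  simp only [innerPolar, mem_ofPred_eq, forall_mem_image, mem_preimage,
    ContinuousLinearMap.adjoint_inner_left]

theorem innerPolar_sub_subset (h0 : 0 ∈ T) :
    innerPolar (T - T) ⊆ innerPolar T ∩ -innerPolar T := by
  rw [← innerPolar_neg]
  refine subset_inter (innerPolar_antitone fun x hx ↦ ?_) (innerPolar_antitone fun x hx ↦ ?_)
  · exact ⟨x, hx, 0, h0, sub_zero x⟩
  · exact ⟨0, h0, -x, hx, by simp⟩

theorem convexHull_union_neg_subset_innerPolar (K : Set E) :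
    convexHull ℝ (K ∪ -K) ⊆ innerPolar (innerPolar K ∩ -innerPolar K) := by
  refine convexHull_min (union_subset ?_ ?_) (convex_innerPolar _)
  · exact (subset_innerPolar_innerPolar K).trans (innerPolar_antitone inter_subset_left)
  · rw [← innerPolar_neg]
    exact (subset_innerPolar_innerPolar (-K)).trans (innerPolar_antitone inter_subset_right)

end Polar

/-! ### Symmetric convex bodies and their volume product -/

/-- A symmetric convex body: a compact convex neighborhood of `0` that is invariant under
negation. -/
structure IsSymmetricBody {E : Type*} [NormedAddCommGroup E] [NormedSpace ℝ E] (T : Set E) :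
    Prop where
  isCompact : IsCompact T
  convex : Convex ℝ T
  mem_nhds_zero : T ∈ nhds 0
  neg_eq : -T = T

section SymmetricBody

variable {E F : Type*} [NormedAddCommGroup E] [NormedSpace ℝ E] [NormedAddCommGroup F]
  [NormedSpace ℝ F] {S T K : Set E}

theorem isSymmetricBody_inter_neg (hK : IsCompact K) (hKc : Convex ℝ K) (h0 : 0 ∈ interior K) :
    IsSymmetricBody (K ∩ -K) where
  isCompact := hK.inter hK.neg
  convex := hKc.inter hKc.neg
  mem_nhds_zero := inter_neg_mem_nhds_zero h0
  neg_eq := by rw [inter_neg, neg_neg, inter_comm]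

theorem isSymmetricBody_sub_self (hK : IsCompact K) (hKc : Convex ℝ K) (h0 : K ∈ nhds 0) :
    IsSymmetricBody (K - K) where
  isCompact := isCompact_sub hK hK
  convex := hKc.sub hKc
  mem_nhds_zero :=
    Filter.mem_of_superset h0 fun x hx ↦ ⟨x, hx, 0, mem_of_mem_nhds h0, sub_zero x⟩
  neg_eq := neg_sub K K

namespace IsSymmetricBody

theorem zero_mem (hT : IsSymmetricBody T) : 0 ∈ T :=
  mem_of_mem_nhds hT.mem_nhds_zero

theorem neg_mem (hT : IsSymmetricBody T) {x : E} (hx : x ∈ T) : -x ∈ T :=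
  mem_neg.1 (hT.neg_eq.symm ▸ hx)

theorem smul_mem (hT : IsSymmetricBody T) {x : E} (hx : x ∈ T) {c : ℝ} (hc : |c| ≤ 1) :
    c • x ∈ T := by
  rw [abs_le] at hc
  have : c • x = ((1 + c) / 2) • x + ((1 - c) / 2) • -x := by module
  rw [this]
  exact hT.convex hx (hT.neg_mem hx) (by linarith) (by linarith) (by ring)

theorem inter (hS : IsSymmetricBody S) (hT : IsSymmetricBody T) : IsSymmetricBody (S ∩ T) where
  isCompact := hS.isCompact.inter hT.isCompact
  convex := hS.convex.inter hT.convex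
  mem_nhds_zero := Filter.inter_mem hS.mem_nhds_zero hT.mem_nhds_zero
  neg_eq := by rw [inter_neg, hS.neg_eq, hT.neg_eq]

theorem smul (hT : IsSymmetricBody T) {r : ℝ} (hr : r ≠ 0) : IsSymmetricBody (r • T) where
  isCompact := hT.isCompact.smul r
  convex := hT.convex.smul r
  mem_nhds_zero := (set_smul_mem_nhds_zero_iff hr).2 hT.mem_nhds_zero
  neg_eq := by rw [← smul_set_neg, hT.neg_eq]

theorem image [CompleteSpace E] [CompleteSpace F] (hT : IsSymmetricBody T) (f : E →L[ℝ] F)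
    (hf : Function.Surjective f) : IsSymmetricBody (f '' T) where
  isCompact := hT.isCompact.image f.continuous
  convex := hT.convex.linear_image f.toLinearMap
  mem_nhds_zero := map_zero f ▸ (f.isOpenMap hf).image_mem_nhds hT.mem_nhds_zero
  neg_eq := by rw [← image_neg, hT.neg_eq]

end IsSymmetricBody

end SymmetricBody

section VolumeProduct

variable {V : Type*} [NormedAddCommGroup V] [InnerProductSpace ℝ V] [FiniteDimensional ℝ V]
  {S T : Set V}

namespace IsSymmetricBody

theorem innerPolar (hT : IsSymmetricBody T) : IsSymmetricBody (innerPolar T) where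
  isCompact := isCompact_innerPolar hT.mem_nhds_zero
  convex := convex_innerPolar T
  mem_nhds_zero := innerPolar_mem_nhds_zero hT.isCompact.isBounded
  neg_eq := by rw [← innerPolar_neg, hT.neg_eq]

theorem innerPolar_inter_innerPolar_subset (hT : IsSymmetricBody T) :
    _root_.innerPolar (T ∩ _root_.innerPolar T) ⊆ T - _root_.innerPolar T := by
  have h0 : 0 ∈ T - _root_.innerPolar T :=
    ⟨0, hT.zero_mem, 0, zero_mem_innerPolar T, sub_zero 0⟩
  rw [← innerPolar_innerPolar (isCompact_sub hT.isCompact hT.innerPolar.isCompact).isClosed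
    (hT.convex.sub hT.innerPolar.convex) h0]
  refine innerPolar_antitone fun y hy ↦ ⟨?_, fun z hz ↦ ?_⟩
  · rw [← innerPolar_innerPolar hT.isCompact.isClosed hT.convex hT.zero_mem]
    exact fun z hz ↦ hy z ⟨0, hT.zero_mem, -z, hT.innerPolar.neg_mem hz, by simp⟩
  · exact hy z ⟨z, hz, 0, zero_mem_innerPolar T, sub_zero z⟩

theorem sub_innerPolar_subset (hT : IsSymmetricBody T) :
    T - _root_.innerPolar T ⊆ (2 : ℝ) • _root_.innerPolar (T ∩ _root_.innerPolar T) := by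
  rintro _ ⟨t, ht, s, hs, rfl⟩
  rw [mem_smul_set_iff_inv_smul_mem₀ two_ne_zero]
  rintro z ⟨hz, hz'⟩
  have ht' := hz' t ht
  have hs' := hT.innerPolar.neg_mem hs z hz
  rw [real_inner_comm] at ht'
  rw [inner_neg_left] at hs'
  rw [real_inner_smul_left, inner_sub_left]
  linarith

end IsSymmetricBody

theorem det_adjoint (f : V →L[ℝ] V) :
    LinearMap.det (f.adjoint : V →ₗ[ℝ] V) = LinearMap.det (f : V →ₗ[ℝ] V) := by
  set b := stdOrthonormalBasis ℝ V
  change LinearMap.det (LinearMap.adjoint (f : V →ₗ[ℝ] V)) = _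
  rw [← LinearMap.det_toMatrix b.toBasis, ← LinearMap.det_toMatrix b.toBasis (f : V →ₗ[ℝ] V),
    LinearMap.toMatrix_adjoint, Matrix.det_conjTranspose, star_trivial]

variable [MeasurableSpace V] [BorelSpace V] {μ : Measure V} [μ.IsAddHaarMeasure]

/-- The volume product (Mahler volume) of a subset of an inner product space, with respect to a
measure `μ` that is meant to be a multiple of Lebesgue measure. -/
def volumeProduct (μ : Measure V) (T : Set V) : ℝ≥0∞ :=
  μ T * μ (innerPolar T)

theorem volumeProduct_inter_innerPolar_le (hT : IsSymmetricBody T) :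
    volumeProduct μ (T ∩ innerPolar T) ≤ 4 ^ finrank ℝ V * volumeProduct μ T :=
  calc volumeProduct μ (T ∩ innerPolar T)
      ≤ μ (T - innerPolar T) * μ (T ∩ innerPolar T) := by
        rw [volumeProduct, mul_comm]
        gcongr
        exact hT.innerPolar_inter_innerPolar_subset
    _ ≤ 4 ^ finrank ℝ V * volumeProduct μ T :=
        measure_sub_mul_measure_inter_le hT.isCompact hT.innerPolar.isCompact hT.convex
          hT.innerPolar.convex

theorem volumeProduct_le_two_pow_mul (hT : IsSymmetricBody T) :
    volumeProduct μ T ≤ 2 ^ finrank ℝ V * volumeProduct μ (T ∩ innerPolar T) :=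
  calc volumeProduct μ T ≤ μ (T - innerPolar T) * μ (T ∩ innerPolar T) :=
        measure_mul_measure_le_of_neg_eq hT.isCompact hT.innerPolar.isCompact hT.convex
          hT.innerPolar.convex hT.neg_eq hT.innerPolar.neg_eq
    _ ≤ μ ((2 : ℝ) • innerPolar (T ∩ innerPolar T)) * μ (T ∩ innerPolar T) := by
        gcongr
        exact hT.sub_innerPolar_subset
    _ = 2 ^ finrank ℝ V * volumeProduct μ (T ∩ innerPolar T) := by
        rw [Measure.addHaar_smul, abs_of_nonneg (by positivity), ENNReal.ofReal_pow (by positivity),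
          ENNReal.ofReal_ofNat, volumeProduct]
        ring

theorem volumeProduct_image (f : V ≃L[ℝ] V) (T : Set V) :
    volumeProduct μ (f '' T) = volumeProduct μ T := by
  have hdet : LinearMap.det ((f : V →L[ℝ] V) : V →ₗ[ℝ] V) ≠ 0 :=
    (f : V ≃ₗ[ℝ] V).isUnit_det'.ne_zero
  have hpolar := innerPolar_image (f : V →L[ℝ] V) T
  rw [ContinuousLinearEquiv.coe_coe] at hpolar
  rw [volumeProduct, volumeProduct, Measure.addHaar_image_continuousLinearEquiv, hpolar,
    Measure.addHaar_preimage_continuousLinearMap _ (by rwa [det_adjoint]), det_adjoint, abs_inv,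
    ENNReal.ofReal_inv_of_pos (abs_pos.2 hdet), mul_mul_mul_comm]
  convert one_mul _ using 2
  exact ENNReal.mul_inv_cancel (by simpa using hdet) ENNReal.ofReal_ne_top

theorem measure_closedBall_mul_sq {a r : ℝ} (ha : 0 ≤ a) (hr : 0 ≤ r) :
    μ (closedBall (0 : V) (a * r)) ^ 2 =
      ENNReal.ofReal (a ^ 2) ^ finrank ℝ V * μ (closedBall (0 : V) r) ^ 2 := by
  rw [Measure.addHaar_closedBall_mul _ _ ha hr, mul_pow, ← ENNReal.ofReal_pow (by positivity),
    ← ENNReal.ofReal_pow (by positivity), ← pow_mul, ← pow_mul,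
    mul_comm (finrank ℝ V)]

theorem volumeProduct_le_of_subset_closedBall {r : ℝ} (hr : 0 < r) (hT : closedBall 0 r⁻¹ ⊆ T)
    (hT' : T ⊆ closedBall 0 r) :
    volumeProduct μ T ≤ ENNReal.ofReal (r ^ 2) ^ finrank ℝ V * μ (closedBall (0 : V) 1) ^ 2 := by
  have hpolar : innerPolar T ⊆ closedBall 0 r := by
    simpa using innerPolar_subset_closedBall (inv_pos.2 hr) hT
  rw [← measure_closedBall_mul_sq hr.le zero_le_one, mul_one, sq, volumeProduct]
  gcongr

theorem le_volumeProduct_of_closedBall_subset {r : ℝ} (hr : 0 < r) (hT : closedBall 0 r⁻¹ ⊆ T)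
    (hT' : T ⊆ closedBall 0 r) :
    μ (closedBall (0 : V) 1) ^ 2 ≤ ENNReal.ofReal (r ^ 2) ^ finrank ℝ V * volumeProduct μ T := by
  have hpolar : closedBall 0 r⁻¹ ⊆ innerPolar T := closedBall_subset_innerPolar hr hT'
  rw [← mul_inv_cancel₀ hr.ne', measure_closedBall_mul_sq hr.le (inv_nonneg.2 hr.le),
    volumeProduct, sq (μ _)]
  gcongr

end VolumeProduct

section Iteration

variable {V : Type*} [NormedAddCommGroup V] [InnerProductSpace ℝ V] {T : Set V} {r : ℝ}

theorem closedBall_subset_smul_inter_innerPolar (hr : 0 < r) (hT : closedBall 0 (r ^ 2)⁻¹ ⊆ T)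
    (hT' : T ⊆ closedBall 0 (r ^ 2)) : closedBall 0 r⁻¹ ⊆ r • (T ∩ innerPolar T) := by
  have hball : r • closedBall (0 : V) (r ^ 2)⁻¹ = closedBall 0 r⁻¹ := by
    rw [_root_.smul_closedBall _ _ (by positivity), smul_zero, Real.norm_of_nonneg hr.le]
    congr 1
    field_simp
  rw [← hball]
  exact smul_set_mono (subset_inter hT (closedBall_subset_innerPolar (by positivity) hT'))

theorem smul_inter_innerPolar_subset_closedBall (hr : 0 ≤ r) (T : Set V) :
    r • (T ∩ innerPolar T) ⊆ closedBall 0 r := by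
  rintro _ ⟨x, ⟨hxT, hx⟩, rfl⟩
  have hx_inner := hx x hxT
  rw [real_inner_self_eq_norm_sq, sq_le_one_iff₀ (norm_nonneg x)] at hx_inner
  rw [mem_closedBall_zero_iff, norm_smul, Real.norm_of_nonneg hr]
  exact mul_le_of_le_one_right hr hx_inner

variable [FiniteDimensional ℝ V] [MeasurableSpace V] [BorelSpace V]
  {μ : Measure V} [μ.IsAddHaarMeasure]

theorem volumeProduct_smul (hr : r ≠ 0) (T : Set V) :
    volumeProduct μ (r • T) = volumeProduct μ T :=
  volumeProduct_image (ContinuousLinearEquiv.smulLeft (Units.mk0 r hr)) T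

/-- Kuperberg's iteration: `T ↦ r • (T ∩ T°)` replaces a distance `r ^ 2` from the ball by `r`,
while the volume product changes by a factor that is only exponential in the dimension. -/
theorem volumeProduct_bounds_of_closedBall_subset (j : ℕ) (hT : IsSymmetricBody T)
    (hball : closedBall 0 ((2 : ℝ) ^ 2 ^ j)⁻¹ ⊆ T) (hball' : T ⊆ closedBall 0 (2 ^ 2 ^ j)) :
    volumeProduct μ T ≤ (4 * 2 ^ j) ^ finrank ℝ V * μ (closedBall (0 : V) 1) ^ 2 ∧
      μ (closedBall (0 : V) 1) ^ 2 ≤ (4 * 4 ^ j) ^ finrank ℝ V * volumeProduct μ T := by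
  induction j generalizing T with
  | zero =>
    rw [pow_zero, pow_one] at hball hball'
    have h4 : ENNReal.ofReal (2 ^ 2) = 4 := by norm_num
    rw [pow_zero, pow_zero, mul_one, ← h4]
    exact ⟨volumeProduct_le_of_subset_closedBall two_pos hball hball',
      le_volumeProduct_of_closedBall_subset two_pos hball hball'⟩
  | succ j ih =>
    have hr : (0 : ℝ) < 2 ^ 2 ^ j := by positivity
    rw [pow_succ 2 j, pow_mul] at hball hball'
    obtain ⟨hupper, hlower⟩ := ih ((hT.inter hT.innerPolar).smul hr.ne')
      (closedBall_subset_smul_inter_innerPolar hr hball hball')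
      (smul_inter_innerPolar_subset_closedBall hr.le T)
    rw [volumeProduct_smul hr.ne'] at hupper hlower
    constructor
    · calc volumeProduct μ T ≤ 2 ^ finrank ℝ V * volumeProduct μ (T ∩ innerPolar T) :=
            volumeProduct_le_two_pow_mul hT
        _ ≤ 2 ^ finrank ℝ V *
              ((4 * 2 ^ j) ^ finrank ℝ V * μ (closedBall (0 : V) 1) ^ 2) := by gcongr
        _ = (4 * 2 ^ (j + 1)) ^ finrank ℝ V * μ (closedBall (0 : V) 1) ^ 2 := by
            rw [← mul_assoc, ← mul_pow]
            ring_nf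
    · calc μ (closedBall (0 : V) 1) ^ 2
          ≤ (4 * 4 ^ j) ^ finrank ℝ V * volumeProduct μ (T ∩ innerPolar T) := hlower
        _ ≤ (4 * 4 ^ j) ^ finrank ℝ V * (4 ^ finrank ℝ V * volumeProduct μ T) := by
            gcongr
            exact volumeProduct_inter_innerPolar_le hT
        _ = (4 * 4 ^ (j + 1)) ^ finrank ℝ V * volumeProduct μ T := by
            rw [← mul_assoc, ← mul_pow]
            ring_nf

end Iteration

section Auerbach

theorem continuous_basis_det {ι E : Type*} [Fintype ι] [DecidableEq ι] [NormedAddCommGroup E]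
    [NormedSpace ℝ E] (e : Basis ι ℝ E) : Continuous fun v : ι → E ↦ e.det v := by
  have : FiniteDimensional ℝ E := e.finiteDimensional_of_finite
  have hcoord (i : ι) : Continuous (e.coord i) := LinearMap.continuous_of_finiteDimensional _
  simp_rw [Basis.det_apply]
  exact Continuous.matrix_det <| continuous_matrix fun i j ↦ (hcoord i).comp (continuous_apply j)

variable {ι E : Type*} [Fintype ι] [DecidableEq ι] [NormedAddCommGroup E] [NormedSpace ℝ E]
  {T : Set E}

theorem exists_basis_det_ne_zero (e : Basis ι ℝ E) (hT : T ∈ nhds 0) :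
    ∃ v : ι → E, (∀ i, v i ∈ T) ∧ e.det v ≠ 0 := by
  have hsmul (i : ι) : ∀ᶠ t : ℝ in nhds 0, t • e i ∈ T := by
    have : Filter.Tendsto (fun t : ℝ ↦ t • e i) (nhds 0) (nhds 0) := by
      simpa using (by fun_prop : Continuous fun t : ℝ ↦ t • e i).tendsto 0
    exact this.eventually hT
  obtain ⟨t, ht, ht₀⟩ := ((Filter.eventually_all.2 hsmul).filter_mono
    nhdsWithin_le_nhds).and self_mem_nhdsWithin |>.exists (f := nhdsWithin (0 : ℝ) {0}ᶜ)
  refine ⟨fun i ↦ t • e i, ht, ?_⟩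
  rw [AlternatingMap.map_smul_univ, e.det_self, smul_eq_mul, mul_one]
  exact Finset.prod_ne_zero_iff.2 fun _ _ ↦ ht₀

/-- Auerbach's lemma: the vectors are chosen in `T` with maximal determinant. -/
theorem IsSymmetricBody.exists_basis_abs_repr_le_one {ι : Type*} [Finite ι] (e : Basis ι ℝ E)
    (hT : IsSymmetricBody T) :
    ∃ b : Basis ι ℝ E, (∀ i, b i ∈ T) ∧ ∀ x ∈ T, ∀ i, |b.repr x i| ≤ 1 := by
  classical
  have := Fintype.ofFinite ι
  obtain ⟨v, hv, hmax⟩ := (isCompact_univ_pi fun _ : ι ↦ hT.isCompact).exists_isMaxOn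
    ⟨0, fun _ _ ↦ hT.zero_mem⟩ (f := fun v ↦ |e.det v|) (continuous_basis_det e).abs.continuousOn
  have hdet : e.det v ≠ 0 := by
    obtain ⟨w, hw, hw₀⟩ := exists_basis_det_ne_zero e hT.mem_nhds_zero
    exact abs_pos.1 ((abs_pos.2 hw₀).trans_le (hmax fun i _ ↦ hw i))
  obtain ⟨hli, hspan⟩ := (Basis.is_basis_iff_det e).2 hdet.isUnit
  refine ⟨Basis.mk hli hspan.ge, fun i ↦ by simpa using hv i (mem_univ i), fun x hx i ↦ ?_⟩
  have hupdate : |e.det (Function.update v i x)| ≤ |e.det v| :=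
    hmax ((update_mem_pi_iff_of_mem hv).2 fun _ ↦ hx)
  have hcoord : e.det v * (Basis.mk hli hspan.ge).repr x i = e.det (Function.update v i x) :=
    DFunLike.congr_fun (Basis.det_smul_mk_coord_eq_det_update e hli hspan.ge i) x
  rw [← hcoord, abs_mul] at hupdate
  exact le_of_mul_le_mul_left (by simpa using hupdate) (abs_pos.2 hdet)

end Auerbach

section Position

variable {V : Type*} [NormedAddCommGroup V] [InnerProductSpace ℝ V] {T : Set V}

theorem IsSymmetricBody.closedBall_subset_of_orthonormalBasis_mem {ι : Type*} [Fintype ι]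
    [Nonempty ι] (hT : IsSymmetricBody T) (o : OrthonormalBasis ι ℝ V) (ho : ∀ i, o i ∈ T) :
    closedBall 0 (Fintype.card ι : ℝ)⁻¹ ⊆ T := by
  intro y hy
  rw [mem_closedBall_zero_iff] at hy
  set k : ℝ := (Fintype.card ι : ℝ) with hk
  have hk₀ : 0 < k := by positivity
  have hcoord (i : ι) : |k * o.repr y i| ≤ 1 := by
    have hinner : |o.repr y i| ≤ ‖y‖ := by
      simpa [o.repr_apply_apply] using abs_real_inner_le_norm (o i) y
    rw [abs_mul, abs_of_pos hk₀, ← mul_inv_cancel₀ hk₀.ne']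
    gcongr
    exact hinner.trans hy
  have hsum : y = ∑ i, k⁻¹ • (k * o.repr y i) • o i := by
    simp_rw [smul_smul, inv_mul_cancel_left₀ hk₀.ne', o.sum_repr]
  rw [hsum]
  exact hT.convex.sum_mem (fun _ _ ↦ by positivity) (by simp [← hk, hk₀.ne'])
    fun i _ ↦ hT.smul_mem (ho i) (hcoord i)

theorem subset_closedBall_of_abs_repr_le_one {ι : Type*} [Fintype ι] (o : OrthonormalBasis ι ℝ V)
    (ho : ∀ x ∈ T, ∀ i, |o.repr x i| ≤ 1) : T ⊆ closedBall 0 (Fintype.card ι) := by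
  intro x hx
  rw [mem_closedBall_zero_iff, ← o.sum_repr x]
  calc ‖∑ i, o.repr x i • o i‖ ≤ ∑ i, ‖o.repr x i • o i‖ := norm_sum_le _ _
    _ ≤ ∑ _ : ι, (1 : ℝ) := by
        gcongr with i
        simpa [norm_smul, o.norm_eq_one] using ho x hx i
    _ = Fintype.card ι := by simp

theorem IsSymmetricBody.exists_closedBall_subset_image [FiniteDimensional ℝ V]
    [Nontrivial V] (hT : IsSymmetricBody T) :
    ∃ f : V ≃L[ℝ] V, closedBall 0 (finrank ℝ V : ℝ)⁻¹ ⊆ f '' T ∧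
      f '' T ⊆ closedBall 0 (finrank ℝ V) := by
  set o := stdOrthonormalBasis ℝ V
  obtain ⟨b, hbT, hb⟩ := hT.exists_basis_abs_repr_le_one o.toBasis
  have : Nonempty (Fin (finrank ℝ V)) := ⟨⟨0, finrank_pos⟩⟩
  set f : V ≃ₗ[ℝ] V := b.repr.trans o.toBasis.repr.symm
  have hf (i) : f (b i) = o i := by simp [f]
  have hrepr (x i) : o.repr (f x) i = b.repr x i := by
    rw [← OrthonormalBasis.coe_toBasis_repr_apply, LinearEquiv.trans_apply,
      LinearEquiv.apply_symm_apply]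
  refine ⟨f.toContinuousLinearEquiv, ?_, ?_⟩
  · have hfT : IsSymmetricBody (f '' T) :=
      hT.image (f.toContinuousLinearEquiv : V →L[ℝ] V) f.surjective
    simpa using hfT.closedBall_subset_of_orthonormalBasis_mem o fun i ↦ ⟨b i, hbT i, hf i⟩
  · have : f '' T ⊆ closedBall 0 (Fintype.card (Fin (finrank ℝ V))) := by
      refine subset_closedBall_of_abs_repr_le_one o ?_
      rintro _ ⟨x, hx, rfl⟩ i
      rw [hrepr]
      exact hb x hx i
    simpa using this

variable [FiniteDimensional ℝ V] [MeasurableSpace V] [BorelSpace V] [Nontrivial V]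
  {μ : Measure V} [μ.IsAddHaarMeasure] {S : Set V} {j : ℕ}

theorem volumeProduct_bounds (hj : finrank ℝ V ≤ 2 ^ 2 ^ j) (hT : IsSymmetricBody T) :
    volumeProduct μ T ≤ (4 * 2 ^ j) ^ finrank ℝ V * μ (closedBall (0 : V) 1) ^ 2 ∧
      μ (closedBall (0 : V) 1) ^ 2 ≤ (4 * 4 ^ j) ^ finrank ℝ V * volumeProduct μ T := by
  obtain ⟨f, hball, hball'⟩ := hT.exists_closedBall_subset_image
  have hj' : (finrank ℝ V : ℝ) ≤ 2 ^ 2 ^ j := mod_cast hj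
  have hpos : (0 : ℝ) < finrank ℝ V := mod_cast finrank_pos
  rw [← volumeProduct_image f T]
  exact volumeProduct_bounds_of_closedBall_subset j
    (hT.image (f : V →L[ℝ] V) f.surjective)
    ((closedBall_subset_closedBall (by gcongr)).trans hball)
    (hball'.trans (closedBall_subset_closedBall hj'))

theorem measure_innerPolar_le (hj : finrank ℝ V ≤ 2 ^ 2 ^ j) (hS : IsSymmetricBody S)
    (hT : IsSymmetricBody T) {c : ℝ≥0∞} (h : μ S ≤ c * μ T) :
    μ (innerPolar T) ≤ c * (16 * 8 ^ j) ^ finrank ℝ V * μ (innerPolar S) := by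
  have hT₀ : μ T ≠ 0 := (Measure.measure_pos_of_mem_nhds μ hT.mem_nhds_zero).ne'
  have hT_top : μ T ≠ ∞ := hT.isCompact.measure_ne_top
  rw [← ENNReal.mul_le_mul_iff_right hT₀ hT_top]
  calc μ T * μ (innerPolar T)
      ≤ (4 * 2 ^ j) ^ finrank ℝ V * μ (closedBall (0 : V) 1) ^ 2 :=
        (volumeProduct_bounds hj hT).1
    _ ≤ (4 * 2 ^ j) ^ finrank ℝ V *
          ((4 * 4 ^ j) ^ finrank ℝ V * (μ S * μ (innerPolar S))) := by
        gcongr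
        exact (volumeProduct_bounds hj hS).2
    _ ≤ (4 * 2 ^ j) ^ finrank ℝ V *
          ((4 * 4 ^ j) ^ finrank ℝ V * (c * μ T * μ (innerPolar S))) := by gcongr
    _ = μ T * (c * (16 * 8 ^ j) ^ finrank ℝ V * μ (innerPolar S)) := by
        have h8 : (16 * 8 ^ j : ℝ≥0∞) = 4 * 2 ^ j * (4 * 4 ^ j) := by
          rw [mul_mul_mul_comm, ← mul_pow]
          norm_num
        rw [h8, mul_pow (4 * 2 ^ j)]
        ring

end Position

/-! ### Sections by a subspace -/

theorem setIntegral_image_eq_zero {E F : Type*} [NormedAddCommGroup E] [NormedSpace ℝ E]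
    [FiniteDimensional ℝ E] [MeasurableSpace E] [BorelSpace E] [NormedAddCommGroup F]
    [NormedSpace ℝ F] [FiniteDimensional ℝ F] [MeasurableSpace F] [BorelSpace F]
    {μ : Measure E} [μ.IsAddHaarMeasure] {ν : Measure F} [ν.IsAddHaarMeasure] (φ : E ≃L[ℝ] F)
    {K : Set E} (hK : ∫ x in K, x ∂μ = 0) : ∫ x in φ '' K, x ∂ν = 0 := by
  have hφ : MeasurableEmbedding φ := φ.toHomeomorph.measurableEmbedding
  rw [Measure.isAddLeftInvariant_eq_smul ν (μ.map φ), Measure.restrict_smul,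
    integral_smul_nnreal_measure, hφ.setIntegral_map, φ.injective.preimage_image,
    φ.integral_comp_comm (fun x ↦ x), hK, map_zero, smul_zero]

theorem convexHull_union_neg_subset_sub {E : Type*} [AddCommGroup E] [Module ℝ E] {K : Set E}
    (hK : Convex ℝ K) (h0 : 0 ∈ K) : convexHull ℝ (K ∪ -K) ⊆ K - K := by
  refine convexHull_min (union_subset (fun x hx ↦ ?_) fun x hx ↦ ?_) (hK.sub hK)
  · exact ⟨x, hx, 0, h0, sub_zero x⟩
  · exact ⟨0, h0, -x, hx, by simp⟩

section Subspace

variable {E : Type*} [NormedAddCommGroup E] [InnerProductSpace ℝ E] [FiniteDimensional ℝ E]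

/-- The decomposition of a vector into its components along `H` and `Hᗮ`, with the plain product
as codomain. -/
def prodOrthogonalEquiv (H : Submodule ℝ E) : E ≃L[ℝ] H × Hᗮ :=
  H.orthogonalDecomposition.toContinuousLinearEquiv.trans
    (WithLp.prodContinuousLinearEquiv 2 ℝ H Hᗮ)

theorem fst_prodOrthogonalEquiv (H : Submodule ℝ E) (x : E) :
    (prodOrthogonalEquiv H x).1 = H.orthogonalProjectionOnto x :=
  H.fst_orthogonalDecomposition_apply x

theorem prodOrthogonalEquiv_coe (H : Submodule ℝ E) (u : H) :
    prodOrthogonalEquiv H u = (u, 0) := by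
  simp [prodOrthogonalEquiv, Submodule.orthogonalDecomposition_apply]

theorem finrank_prod_orthogonal (H : Submodule ℝ E) : finrank ℝ (H × Hᗮ) = finrank ℝ E :=
  (prodOrthogonalEquiv H).toLinearEquiv.finrank_eq.symm

theorem innerPolar_image_orthogonalProjectionOnto (H : Submodule ℝ E) (A : Set E) :
    innerPolar (H.orthogonalProjectionOnto '' A) = (↑) ⁻¹' innerPolar A := by
  rw [innerPolar_image, Submodule.adjoint_orthogonalProjectionOnto]
  rfl

variable [MeasurableSpace E] [BorelSpace E] {H : Submodule ℝ E} {μ : Measure H}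
  [μ.IsAddHaarMeasure] {K : Set E} {j : ℕ}

theorem measure_preimage_coe_sub_le [Nontrivial H] (hK : IsCompact K) (hKc : Convex ℝ K)
    (h0 : 0 ∈ interior K) (hbar : ∫ x in K, x = 0) :
    μ ((↑) ⁻¹' (K - K)) ≤
      ENNReal.ofReal (128 * finrank ℝ E / finrank ℝ H) ^ finrank ℝ H * μ ((↑) ⁻¹' (K ∩ -K)) := by
  set φ := prodOrthogonalEquiv H
  have hsection (A : Set E) : LinearMap.inl ℝ H Hᗮ ⁻¹' (φ '' A) = (↑) ⁻¹' A := by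
    ext u
    rw [mem_preimage, LinearMap.inl_apply, ← prodOrthogonalEquiv_coe,
      φ.injective.mem_set_image, mem_preimage]
  have := measure_section_sub_le (μ := μ) (ν := (Measure.addHaar : Measure Hᗮ))
    (hK.image φ.continuous) (hKc.linear_image φ.toLinearMap)
    (φ.isOpenMap.image_interior_subset K ⟨0, h0, map_zero φ⟩) (setIntegral_image_eq_zero φ hbar)
  rwa [← image_sub, ← image_neg, ← image_inter φ.injective, hsection, hsection,
    finrank_prod_orthogonal] at this

theorem measure_image_orthogonalProjectionOnto_sub_le [Nontrivial H] (hK : IsCompact K)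
    (hKc : Convex ℝ K) (h0 : 0 ∈ interior K) (hbar : ∫ x in K, x = 0) :
    μ (H.orthogonalProjectionOnto '' K - H.orthogonalProjectionOnto '' K) ≤
      ENNReal.ofReal (128 * finrank ℝ E / finrank ℝ H) ^ finrank ℝ H *
        μ (H.orthogonalProjectionOnto '' (K ∩ -K)) := by
  set φ := prodOrthogonalEquiv H
  have hproj (A : Set E) : Prod.fst '' (φ '' A) = H.orthogonalProjectionOnto '' A := by
    simp only [image_image, φ, fst_prodOrthogonalEquiv]
  have := measure_image_fst_sub_le (μ := μ) (ν := (Measure.addHaar : Measure Hᗮ))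
    (hK.image φ.continuous) (hKc.linear_image φ.toLinearMap)
    (φ.isOpenMap.image_interior_subset K ⟨0, h0, map_zero φ⟩) (setIntegral_image_eq_zero φ hbar)
  rwa [← image_neg, ← image_inter φ.injective, hproj, hproj, finrank_prod_orthogonal] at this

theorem measure_preimage_innerPolar_inter_neg_le [Nontrivial H] (hj : finrank ℝ H ≤ 2 ^ 2 ^ j)
    (hK : IsCompact K) (hKc : Convex ℝ K) (h0 : 0 ∈ interior K) (hbar : ∫ x in K, x = 0) :
    μ ((↑) ⁻¹' innerPolar (K ∩ -K)) ≤
      ENNReal.ofReal (128 * finrank ℝ E / finrank ℝ H) ^ finrank ℝ H *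
        (16 * 8 ^ j) ^ finrank ℝ H * μ ((↑) ⁻¹' (innerPolar K ∩ -innerPolar K)) := by
  set P := H.orthogonalProjectionOnto
  have hP : Function.Surjective P :=
    fun u ↦ ⟨u, H.orthogonalProjectionOnto_mem_subspace_eq_self u⟩
  have hK₀ : K ∈ nhds 0 := mem_interior_iff_mem_nhds.1 h0
  have hsub : IsSymmetricBody (P '' (K - K)) := (isSymmetricBody_sub_self hK hKc hK₀).image P hP
  have hinter : IsSymmetricBody (P '' (K ∩ -K)) := (isSymmetricBody_inter_neg hK hKc h0).image P hP
  have hproj := measure_image_orthogonalProjectionOnto_sub_le (μ := μ) hK hKc h0 hbar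
  rw [← image_sub] at hproj
  have hpolar := measure_innerPolar_le hj hsub hinter hproj
  rw [innerPolar_image_orthogonalProjectionOnto, innerPolar_image_orthogonalProjectionOnto]
    at hpolar
  refine hpolar.trans ?_
  gcongr
  exact innerPolar_sub_subset (interior_subset h0)

theorem measure_section_convexHull_union_neg_le [Nontrivial H] (hj : finrank ℝ H ≤ 2 ^ 2 ^ j)
    (hK : IsCompact K) (hKc : Convex ℝ K) (h0 : 0 ∈ interior K)
    (hbar : ∫ x in K, x = 0 ∨ ∫ x in innerPolar K, x = 0) :
    μ ((↑) ⁻¹' convexHull ℝ (K ∪ -K)) ≤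
      ENNReal.ofReal (128 * finrank ℝ E / finrank ℝ H * (16 * 8 ^ j)) ^ finrank ℝ H *
        μ ((↑) ⁻¹' (K ∩ -K)) := by
  have hK₀ : 0 ∈ K := interior_subset h0
  rw [ENNReal.ofReal_mul (by positivity), mul_pow]
  have hconst : ENNReal.ofReal (16 * 8 ^ j) = 16 * 8 ^ j := by
    rw [ENNReal.ofReal_mul (by norm_num), ENNReal.ofReal_pow (by norm_num)]
    norm_num
  rw [hconst]
  rcases hbar with hbar | hbar
  · have hone : (1 : ℝ≥0∞) ≤ (16 * 8 ^ j) ^ finrank ℝ H :=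
      one_le_pow₀ (one_le_mul (by norm_num) (one_le_pow₀ (by norm_num)))
    calc μ ((↑) ⁻¹' convexHull ℝ (K ∪ -K)) ≤ μ ((↑) ⁻¹' (K - K)) := by
          gcongr
          exact convexHull_union_neg_subset_sub hKc hK₀
      _ ≤ _ := measure_preimage_coe_sub_le hK hKc h0 hbar
      _ ≤ _ := by
          gcongr
          exact le_mul_of_one_le_right zero_le hone
  · have hpolar : 0 ∈ interior (innerPolar K) :=
      mem_interior_iff_mem_nhds.2 (innerPolar_mem_nhds_zero hK.isBounded)
    have := measure_preimage_innerPolar_inter_neg_le (μ := μ) hj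
      (isCompact_innerPolar (mem_interior_iff_mem_nhds.1 h0)) (convex_innerPolar K) hpolar hbar
    rw [innerPolar_innerPolar hK.isClosed hKc hK₀] at this
    refine le_trans ?_ this
    gcongr
    exact convexHull_union_neg_subset_innerPolar K

end Subspace

section VolumeRadius

theorem exists_le_two_pow_two_pow {n : ℕ} (hn : 2 ≤ n) :
    ∃ j : ℕ, n ≤ 2 ^ 2 ^ j ∧ (8 : ℝ) ^ j ≤ 64 * Real.log n ^ 3 := by
  set m := Nat.log 2 n
  have hm : m ≠ 0 := (Nat.log_pos one_lt_two hn).ne'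
  have hm_lt : m < 2 ^ (Nat.log 2 m + 1) := Nat.lt_pow_succ_log_self one_lt_two m
  have hm_log : (m : ℝ) ≤ 2 * Real.log n := by
    have hpow : m * Real.log 2 ≤ Real.log n := by
      rw [← Real.log_pow]
      exact Real.log_le_log (by positivity) (mod_cast Nat.pow_log_le_self 2 (by lia))
    nlinarith [Real.log_two_gt_d9]
  have hpow : (2 : ℝ) ^ (Nat.log 2 m + 1) ≤ 4 * Real.log n := by
    have : (2 : ℝ) ^ Nat.log 2 m ≤ m := mod_cast Nat.pow_log_le_self 2 hm
    rw [pow_succ]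
    linarith
  refine ⟨Nat.log 2 m + 1, ?_, ?_⟩
  · exact (Nat.lt_pow_succ_log_self one_lt_two n).le.trans (Nat.pow_le_pow_right two_pos hm_lt)
  · calc (8 : ℝ) ^ (Nat.log 2 m + 1) = (2 ^ (Nat.log 2 m + 1)) ^ 3 := by
          rw [← pow_mul, mul_comm, pow_mul]
          norm_num
      _ ≤ (4 * Real.log n) ^ 3 := by gcongr
      _ = 64 * Real.log n ^ 3 := by ring

theorem hausdorffMeasure_inter_submodule {E : Type*} [NormedAddCommGroup E] [NormedSpace ℝ E]
    [MeasurableSpace E] [BorelSpace E] {d : ℝ} (hd : 0 ≤ d) (H : Submodule ℝ E) (A : Set E) :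
    μH[d] (A ∩ H) = (μH[d] : Measure H) ((↑) ⁻¹' A) := by
  rw [← H.subtypeₗᵢ.isometry.hausdorffMeasure_image (Or.inl hd)]
  congr 1
  ext x
  simp [and_comm]

variable {n k : ℕ} {H : Submodule ℝ (EuclideanSpace ℝ (Fin n))}
  {A B : Set (EuclideanSpace ℝ (Fin n))}

theorem vrad_le_mul_vrad (hk : 0 < k) {c : ℝ≥0∞}
    (h : (μH[k] : Measure H) ((↑) ⁻¹' A) ≤ c ^ k * (μH[k] : Measure H) ((↑) ⁻¹' B)) :
    vrad k H (A ∩ H) ≤ c * vrad k H (B ∩ H) := by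
  rw [← hausdorffMeasure_inter_submodule (by positivity),
    ← hausdorffMeasure_inter_submodule (by positivity)] at h
  set ballMeasure := μH[k] (closedBall (0 : EuclideanSpace ℝ (Fin n)) 1 ∩ (H : Set _))
  calc vrad k H (A ∩ H)
      ≤ (c ^ k * (μH[k] (B ∩ H) / ballMeasure)) ^ (k : ℝ)⁻¹ := by
        rw [← mul_div_assoc, vrad]
        gcongr
    _ = c * vrad k H (B ∩ H) := by
        rw [ENNReal.mul_rpow_of_nonneg _ _ (by positivity), ENNReal.pow_rpow_inv_natCast hk.ne',
          vrad]

theorem stmt1_general :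
    ∃ C : ℝ, 0 < C ∧ ∀ (n : ℕ) (K : Set (EuclideanSpace ℝ (Fin n))),
      IsCompact K → Convex ℝ K → 0 ∈ interior K →
      (∫ x in K, x = 0 ∨ ∫ x in polarBody K, x = 0) →
      ∀ k : ℕ, 1 ≤ k → ∀ H : Submodule ℝ (EuclideanSpace ℝ (Fin n)), finrank ℝ H = k →
        vrad k H (convexHull ℝ (K ∪ -K) ∩ H) ≤
          ENNReal.ofReal (n / k * C * Real.log (k + 1) ^ 3) * vrad k H (K ∩ -K ∩ H) := by
  refine ⟨128 * 16 * 64, by norm_num, ?_⟩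
  intro n K hK hKc h0 hbar k hk H hH
  obtain ⟨j, hkj, hj⟩ := exists_le_two_pow_two_pow (n := k + 1) (by lia)
  have : Nontrivial H := nontrivial_of_finrank_pos (hH.symm ▸ hk)
  have : (μH[k] : Measure H).IsAddHaarMeasure := hH ▸ isAddHaarMeasure_hausdorffMeasure
  have hsection := measure_section_convexHull_union_neg_le (μ := (μH[k] : Measure H)) (j := j)
    (hH.trans_le (by lia)) hK hKc h0 hbar
  rw [hH, finrank_euclideanSpace_fin] at hsection
  refine (vrad_le_mul_vrad hk hsection).trans ?_
  gcongr ENNReal.ofReal ?_ * _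
  calc 128 * n / k * (16 * 8 ^ j) ≤ 128 * n / k * (16 * (64 * Real.log (k + 1) ^ 3)) := by
        gcongr
        exact_mod_cast hj
    _ = n / k * (128 * 16 * 64) * Real.log (k + 1) ^ 3 := by ring

end VolumeRadius

/-- Theorem (sections of the outer and inner regularizations): for a convex body `K` with
barycenter of `K` or of `K°` at the origin,
`vrad(K_out ∩ H) ≤ (n/k)·C·(log n)³ · vrad(K_in ∩ H)`. -/
theorem stmt1 :
    ∃ C : ℝ, 0 < C ∧ ∀ (n : ℕ), 2 ≤ n →
      ∀ K : Set (EuclideanSpace ℝ (Fin n)),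
        IsCompact K → Convex ℝ K → (0 : EuclideanSpace ℝ (Fin n)) ∈ interior K →
        ((∫ x in K, x) = 0 ∨ (∫ x in polarBody K, x) = 0) →
        ∀ k : ℕ, 1 ≤ k → k ≤ n - 1 →
          ∀ H : Submodule ℝ (EuclideanSpace ℝ (Fin n)), Module.finrank ℝ H = k →
            vrad k H (convexHull ℝ (K ∪ -K) ∩ (H : Set _)) ≤
              ENNReal.ofReal (((n : ℝ) / k) * C * (Real.log n) ^ 3) *
                vrad k H ((K ∩ -K) ∩ (H : Set _)) := by
  obtain ⟨C, hC, hvrad⟩ := stmt1_general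
  refine ⟨C, hC, fun n hn K hK hKc h0 hbar k hk hkn H hH ↦
    (hvrad n K hK hKc h0 hbar k hk H hH).trans ?_⟩
  have hkn' : (k : ℝ) + 1 ≤ n := mod_cast (by lia : k + 1 ≤ n)
  have hlog : 0 ≤ Real.log (k + 1) := Real.log_nonneg (by simp)
  gcongr
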